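/- arXiv:1910.06486 — 6 statements merged into one kernel-verified Lean document; each statement's English description precedes it below -/
import Mathlib

section
/- Let d ≥ 2, let N ≥ 3 be a natural number and let 0 < δ < 1. Define A_N = [−N, −N+δ/N] × [0, δ/(d−1)]^{d−1} and B_N = [2N−1, 2N−1+δ/(2N)] × [0, δ/(2(d−1))]^{d−1} in ℝ^d. Then for every ξ₁ ∈ A_N and ξ₂ ∈ B_N, the resonance quantity σ₊ = |ξ₁+ξ₂|² − |ξ₁|² + |ξ₂| satisfies σ₊ ∈ [0, 7δ). -/
/-!
Write `ξ₁ = (x, p)` and `ξ₂ = (y, q)` with `x, y` the first coordinates. Expanding the square,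
`σ₊ = y (y + 2 x + 1) + (|q|² + 2 p · q) + (|ξ₂| - y)`.
The corners of the boxes are chosen so that `y + 2 x + 1 = 2 a + b`, where `a ∈ [0, δ/N]` and
`b ∈ [0, δ/(2N)]` are the offsets of `x` and `y` from `-N` and `2N - 1`. All three terms are then
nonnegative, and since `y < 2N` they are bounded by `5δ`, `5δ/4` and `δ/2` respectively,
for a total below `7δ`.
-/

/-- The box `A_N = [−N, −N+δ/N] × [0, δ/(d−1)]^{d−1}` in `ℝ^d`. -/
def boxA (d N : ℕ) (δ : ℝ) : Set (EuclideanSpace ℝ (Fin d)) :=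
  {ξ | ∀ j : Fin d,
    if (j : ℕ) = 0 then ξ j ∈ Set.Icc (-(N : ℝ)) (-(N : ℝ) + δ / N)
    else ξ j ∈ Set.Icc 0 (δ / ((d : ℝ) - 1))}

/-- The box `B_N = [2N−1, 2N−1+δ/(2N)] × [0, δ/(2(d−1))]^{d−1}` in `ℝ^d`. -/
def boxB (d N : ℕ) (δ : ℝ) : Set (EuclideanSpace ℝ (Fin d)) :=
  {ξ | ∀ j : Fin d,
    if (j : ℕ) = 0 then ξ j ∈ Set.Icc (2 * (N : ℝ) - 1) (2 * (N : ℝ) - 1 + δ / (2 * N))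
    else ξ j ∈ Set.Icc 0 (δ / (2 * ((d : ℝ) - 1)))}

/-- On `A_N × B_N` the resonance `σ₊ = |ξ₁+ξ₂|² − |ξ₁|² + |ξ₂|` lies in `[0, 7δ)`. -/
theorem sigma_plus_bound
    (d N : ℕ) (hd : 2 ≤ d) (hN : 3 ≤ N)
    (δ : ℝ) (hδ0 : 0 < δ) (hδ1 : δ < 1)
    (ξ₁ ξ₂ : EuclideanSpace ℝ (Fin d))
    (h₁ : ξ₁ ∈ boxA d N δ) (h₂ : ξ₂ ∈ boxB d N δ) :
    ‖ξ₁ + ξ₂‖ ^ 2 - ‖ξ₁‖ ^ 2 + ‖ξ₂‖ ∈ Set.Ico 0 (7 * δ) := by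
  obtain ⟨n, rfl⟩ : ∃ n, d = n + 1 := ⟨d - 1, by omega⟩
  have hn1 : (1 : ℝ) ≤ n := by exact_mod_cast (show 1 ≤ n by omega)
  have hn0 : (0 : ℝ) < n := by linarith
  have hN3 : (3 : ℝ) ≤ N := by exact_mod_cast hN
  have hN0 : (0 : ℝ) < N := by linarith
  obtain ⟨hx, hx'⟩ : ξ₁ 0 ∈ Set.Icc (-(N : ℝ)) (-(N : ℝ) + δ / N) := by
    simpa using h₁ 0
  obtain ⟨hy, hy'⟩ :
      ξ₂ 0 ∈ Set.Icc (2 * (N : ℝ) - 1) (2 * (N : ℝ) - 1 + δ / (2 * N)) := by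
    simpa using h₂ 0
  have hp : ∀ i : Fin n, 0 ≤ ξ₁ i.succ ∧ ξ₁ i.succ ≤ δ / n := fun i => by
    simpa using h₁ i.succ
  have hq : ∀ i : Fin n, 0 ≤ ξ₂ i.succ ∧ ξ₂ i.succ ≤ δ / (2 * n) := fun i => by
    simpa using h₂ i.succ
  have hr : ‖ξ₂‖ ^ 2 = ξ₂ 0 ^ 2 + ∑ i : Fin n, ξ₂ i.succ ^ 2 := by
    rw [EuclideanSpace.real_norm_sq_eq, Fin.sum_univ_succ]
  have hs : ‖ξ₁ + ξ₂‖ ^ 2 - ‖ξ₁‖ ^ 2 = ξ₂ 0 ^ 2 + 2 * ξ₁ 0 * ξ₂ 0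
      + ∑ i : Fin n, (ξ₂ i.succ ^ 2 + 2 * ξ₁ i.succ * ξ₂ i.succ) := by
    rw [EuclideanSpace.real_norm_sq_eq, EuclideanSpace.real_norm_sq_eq,
      ← Finset.sum_sub_distrib, Fin.sum_univ_succ]
    congr 1
    · simp only [PiLp.add_apply]; ring
    · refine Finset.sum_congr rfl fun i _ => ?_
      simp only [PiLp.add_apply]; ring
  have hδn : δ / n ≤ δ := div_le_self hδ0.le hn1
  have hδn0 : 0 < δ / n := by positivity
  have e2 : δ / (2 * n) = (δ / n) / 2 := by field_simp
  have e3 : δ / (2 * N) = (δ / N) / 2 := by field_simp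
  rw [e3] at hy'
  simp only [e2] at hq
  have hnu : (n : ℝ) * (δ / n) = δ := by field_simp
  have hNv : (N : ℝ) * (δ / N) = δ := by field_simp
  have hv0 : 0 < δ / N := by positivity
  set u := δ / n
  set v := δ / N
  set r := ‖ξ₂‖
  have hr0 : 0 ≤ r := norm_nonneg _
  have hQ0 : 0 ≤ ∑ i : Fin n, ξ₂ i.succ ^ 2 := Finset.sum_nonneg fun i _ => sq_nonneg _
  have hδu : δ * u ≤ δ := mul_le_of_le_one_right hδ0.le (by linarith)
  have hQ1 : ∑ i : Fin n, ξ₂ i.succ ^ 2 ≤ δ * u / 4 := by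
    have h : ∑ i : Fin n, ξ₂ i.succ ^ 2 ≤ ∑ _i : Fin n, u ^ 2 / 4 :=
      Finset.sum_le_sum fun i _ => by
        have h2 := pow_le_pow_left₀ (hq i).1 (hq i).2 2
        linarith
    have e : ∑ _i : Fin n, u ^ 2 / 4 = δ * u / 4 := by
      simp only [Finset.sum_const, Finset.card_univ, Fintype.card_fin, nsmul_eq_mul]
      linear_combination (u / 4) * hnu
    linarith
  have hS0 : 0 ≤ ∑ i : Fin n, (ξ₂ i.succ ^ 2 + 2 * ξ₁ i.succ * ξ₂ i.succ) :=
    Finset.sum_nonneg fun i _ => by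
      have := mul_nonneg (hp i).1 (hq i).1
      linarith [sq_nonneg (ξ₂ i.succ), mul_assoc 2 (ξ₁ i.succ) (ξ₂ i.succ)]
  have hS1 : ∑ i : Fin n, (ξ₂ i.succ ^ 2 + 2 * ξ₁ i.succ * ξ₂ i.succ) ≤ 5 / 4 * (δ * u) := by
    have h : ∑ i : Fin n, (ξ₂ i.succ ^ 2 + 2 * ξ₁ i.succ * ξ₂ i.succ)
        ≤ ∑ _i : Fin n, 5 / 4 * u ^ 2 :=
      Finset.sum_le_sum fun i _ => by
        have h1 := mul_le_mul (hp i).2 (hq i).2 (hq i).1 hδn0.le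
        have h2 := pow_le_pow_left₀ (hq i).1 (hq i).2 2
        linarith
    have e : ∑ _i : Fin n, 5 / 4 * u ^ 2 = 5 / 4 * (δ * u) := by
      simp only [Finset.sum_const, Finset.card_univ, Fintype.card_fin, nsmul_eq_mul]
      linear_combination (5 / 4 * u) * hnu
    linarith
  have hy0 : 0 ≤ ξ₂ 0 := by linarith
  have hry : ξ₂ 0 ≤ r := by
    exact (abs_le_of_sq_le_sq' (by linarith) hr0).2
  -- The tail of `ξ₂` has norm at most `δ / 2`, so `|ξ₂|² ≤ y² + (δ / 2)² ≤ (y + δ / 2)²`.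
  have hry' : r ≤ ξ₂ 0 + δ / 2 := by
    refine abs_le_of_sq_le_sq' ?_ (by positivity) |>.2
    have h1 : δ * u ≤ δ * δ := mul_le_mul_of_nonneg_left hδn hδ0.le
    have h2 := mul_nonneg hy0 hδ0.le
    linarith
  have hv1 : v ≤ 1 := by
    have h := mul_le_mul_of_nonneg_right hN3 hv0.le
    linarith
  have hy2N : ξ₂ 0 ≤ 2 * N := by linarith
  -- The cancellation at the corners: `y + 2 x + 1` lies in `[0, 5 δ / (2 N)]`.
  have hM0 : 0 ≤ ξ₂ 0 * (ξ₂ 0 + 2 * ξ₁ 0 + 1) := mul_nonneg hy0 (by linarith)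
  have hM1 : ξ₂ 0 * (ξ₂ 0 + 2 * ξ₁ 0 + 1) ≤ 5 * δ := by
    have h : ξ₂ 0 * (ξ₂ 0 + 2 * ξ₁ 0 + 1) ≤ (2 * N) * (5 / 2 * v) :=
      mul_le_mul hy2N (by linarith) (by linarith) (by linarith)
    linarith
  rw [hs]
  constructor
  · linarith
  · linarith
end

section
/- Let d ≥ 2, let N ≥ 3 be a natural number and let 0 < δ < 1. Define A_N = [−N, −N+δ/N] × [0, δ/(d−1)]^{d−1} and B_N = [2N−1, 2N−1+δ/(2N)] × [0, δ/(2(d−1))]^{d−1} in ℝ^d. Then for every ξ₁ ∈ A_N and ξ₂ ∈ B_N, the resonance quantity σ₋ = |ξ₁+ξ₂|² − |ξ₁|² − |ξ₂| satisfies σ₋ ∈ (−5N, −N/2). -/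
/-!
Write `a`, `b` for the first coordinates of `ξ₁`, `ξ₂`. Expanding the squares,
`|ξ₁+ξ₂|² − |ξ₁|² = b (2a + b) + ∑ yⱼ (2xⱼ + yⱼ)`, where `xⱼ`, `yⱼ` are the transverse coordinates.
The boxes are so thin that `−1 ≤ 2a + b ≤ 0`, and the transverse sum lies in `[0, 5/4]`; likewise
`b ≤ |ξ₂| ≤ b + 1`. Hence `−2b − 1 ≤ σ₋ ≤ 5/4 − b`, and `b` lies within `1` of `2N − 1/2`, which
gives both bounds with room to spare.
-/

/-- A sum of `m` terms, each at most `5/4 (δ/m)²`, stays below `5/4` because `m (δ/m)² ≤ δ² ≤ 1`. -/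
lemma sum_le_of_le_sq {m : ℕ} (hm : 1 ≤ m) {δ : ℝ} (hδ0 : 0 < δ) (hδ1 : δ < 1)
    (f : Fin m → ℝ) (hf : ∀ i, f i ≤ 5 / 4 * (δ / m) ^ 2) : ∑ i, f i ≤ 5 / 4 := by
  have hm' : (1 : ℝ) ≤ m := by exact_mod_cast hm
  have h : ∑ i, f i ≤ ∑ _i : Fin m, 5 / 4 * (δ / m) ^ 2 := Finset.sum_le_sum fun i _ => hf i
  rw [Finset.sum_const, Finset.card_univ, Fintype.card_fin, nsmul_eq_mul] at h
  have hmt : (m : ℝ) * (δ / m) = δ := by field_simp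
  have ht0 : 0 < δ / m := by positivity
  have ht1 : δ / m ≤ 1 := by rw [div_le_one (by linarith)]; linarith
  nlinarith [mul_le_mul_of_nonneg_left ht1 hδ0.le]

/-- On `A_N × B_N` the resonance `σ₋ = |ξ₁+ξ₂|² − |ξ₁|² − |ξ₂|` lies in `(−5N, −N/2)`. -/
theorem sigma_minus_bound
    (d N : ℕ) (hd : 2 ≤ d) (hN : 3 ≤ N)
    (δ : ℝ) (hδ0 : 0 < δ) (hδ1 : δ < 1)
    (ξ₁ ξ₂ : EuclideanSpace ℝ (Fin d))
    (h₁ : ξ₁ ∈ boxA d N δ) (h₂ : ξ₂ ∈ boxB d N δ) :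
    ‖ξ₁ + ξ₂‖ ^ 2 - ‖ξ₁‖ ^ 2 - ‖ξ₂‖ ∈ Set.Ioo (-(5 * (N : ℝ))) (-((N : ℝ) / 2)) := by
  obtain ⟨m, rfl⟩ : ∃ m, d = m + 1 := ⟨d - 1, by omega⟩
  have hm : 1 ≤ m := by omega
  have hm' : (1 : ℝ) ≤ m := by exact_mod_cast hm
  have hN' : (3 : ℝ) ≤ N := by exact_mod_cast hN
  have ha := h₁ 0
  have hb := h₂ 0
  simp only [Fin.val_zero, if_true, Set.mem_Icc] at ha hb
  have hx : ∀ i : Fin m, 0 ≤ ξ₁ i.succ ∧ ξ₁ i.succ ≤ δ / m := by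
    intro i
    simpa using h₁ i.succ
  have hy : ∀ i : Fin m, 0 ≤ ξ₂ i.succ ∧ ξ₂ i.succ ≤ δ / m / 2 := by
    intro i
    have h := h₂ i.succ
    have e : δ / (2 * (m : ℝ)) = δ / m / 2 := by rw [mul_comm, div_mul_eq_div_div]
    simpa [e] using h
  have e : δ / (2 * (N : ℝ)) = δ / N / 2 := by rw [mul_comm, div_mul_eq_div_div]
  have hs0 : 0 < δ / N := by positivity
  have hs1 : δ / N ≤ 1 / 3 := by rw [div_le_iff₀ (by linarith)]; linarith
  rw [e] at hb
  have ht0 : 0 < δ / m := by positivity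
  have hcross_le : ∑ i : Fin m, ξ₂ i.succ * (2 * ξ₁ i.succ + ξ₂ i.succ) ≤ 5 / 4 := by
    refine sum_le_of_le_sq hm hδ0 hδ1 _ fun i => ?_
    obtain ⟨hx0, hx1⟩ := hx i
    obtain ⟨hy0, hy1⟩ := hy i
    calc ξ₂ i.succ * (2 * ξ₁ i.succ + ξ₂ i.succ)
        ≤ (δ / m / 2) * (2 * (δ / m) + δ / m / 2) := by gcongr
      _ = 5 / 4 * (δ / m) ^ 2 := by ring
  have hcross_nonneg : 0 ≤ ∑ i : Fin m, ξ₂ i.succ * (2 * ξ₁ i.succ + ξ₂ i.succ) :=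
    Finset.sum_nonneg fun i _ =>
      mul_nonneg (hy i).1 (by linarith [(hx i).1, (hy i).1])
  have hsq_le : ∑ i : Fin m, ξ₂ i.succ ^ 2 ≤ 5 / 4 := by
    refine sum_le_of_le_sq hm hδ0 hδ1 _ fun i => ?_
    nlinarith [pow_le_pow_left₀ (hy i).1 (hy i).2 2, sq_nonneg (δ / (m : ℝ))]
  have hsq_nonneg : 0 ≤ ∑ i : Fin m, ξ₂ i.succ ^ 2 :=
    Finset.sum_nonneg fun i _ => sq_nonneg _
  have hnorm : ‖ξ₂‖ ^ 2 = ξ₂ 0 ^ 2 + ∑ i : Fin m, ξ₂ i.succ ^ 2 := by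
    rw [EuclideanSpace.real_norm_sq_eq, Fin.sum_univ_succ]
  have hexpand : ‖ξ₁ + ξ₂‖ ^ 2 - ‖ξ₁‖ ^ 2 = ξ₂ 0 * (2 * ξ₁ 0 + ξ₂ 0)
      + ∑ i : Fin m, ξ₂ i.succ * (2 * ξ₁ i.succ + ξ₂ i.succ) := by
    rw [EuclideanSpace.real_norm_sq_eq, EuclideanSpace.real_norm_sq_eq, ← Finset.sum_sub_distrib,
      Fin.sum_univ_succ]
    congr 1
    · simp only [PiLp.add_apply]; ring
    · refine Finset.sum_congr rfl fun i _ => ?_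
      simp only [PiLp.add_apply]; ring
  have hb0 : 0 ≤ ξ₂ 0 := by linarith
  have hnorm_ge : ξ₂ 0 ≤ ‖ξ₂‖ := abs_le_of_sq_le_sq' (by linarith) (norm_nonneg _) |>.2
  have hnorm_le : ‖ξ₂‖ ≤ ξ₂ 0 + 1 :=
    abs_le_of_sq_le_sq' (by nlinarith) (by linarith) |>.2
  have hprod_le : ξ₂ 0 * (2 * ξ₁ 0 + ξ₂ 0) ≤ 0 :=
    mul_nonpos_of_nonneg_of_nonpos hb0 (by linarith)
  have hprod_ge : -ξ₂ 0 ≤ ξ₂ 0 * (2 * ξ₁ 0 + ξ₂ 0) := by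
    nlinarith [mul_nonneg hb0 (by linarith : 0 ≤ 2 * ξ₁ 0 + ξ₂ 0 + 1)]
  rw [hexpand]
  constructor <;> linarith
end

section
/- Let d ≥ 2 and k, l ∈ ℝ. For 0 < δ < 1 and a natural number N ≥ 3, define A_N = [−N, −N+δ/N] × [0, δ/(d−1)]^{d−1} and B_N = [2N−1, 2N−1+δ/(2N)] × [0, δ/(2(d−1))]^{d−1} in ℝ^d, and for t > 0 define I⁺_N(ξ) = ∫₀ᵗ ∫_{ℝ^d} (⟨ξ⟩^k / (⟨ξ₁⟩^k ⟨ξ−ξ₁⟩^l)) · cos(s(|ξ|² − |ξ₁|² + |ξ−ξ₁|)) · χ_{A_N}(ξ₁) χ_{B_N}(ξ−ξ₁) dξ₁ ds. Then there exists a constant c > 0, depending only on d, k, l and δ, such that for all N ≥ 3 and all t > 0 with 7δt < 1, one has ‖I⁺_N‖_{L²(ℝ^d)} ≥ c · t · N^{−l−3/2}. -/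
/-!
On the support of the integrand write `ξ = ξ₁ + η` with `ξ₁ ∈ A_N`, `η ∈ B_N`. In the first
coordinate the large terms of the phase cancel, since `(N-1)² - N² + (2N-1) = 0`, and what is left
of `|ξ|² - |ξ₁|² + |η|` lies in `[0, 7δ]` (`phase_bounds`). As `7δt < 1`, the cosine is at least
`1/2` for all `0 ≤ s ≤ t`, so nothing cancels in the integral. The three brackets are all
comparable to `N` (`jb_bounds`), so the weight is at least a constant times `N^{-l}`
(`weight_lower`).

It remains to find many `ξ` for which the domain of integration is large. On the box
`R_N = [N-1+δ/(2N), N-1+δ/N] × [δ/(2(d-1)), δ/(d-1)]^{d-1}` one has `ξ - B_N ⊆ A_N`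
(`sub_mem_boxA`), so the domain of integration is the whole of `ξ - B_N`. Both `B_N` and `R_N` have
volume `V/N` with `V = (δ/2) (δ/(2(d-1)))^{d-1}`. Hence `I⁺_N ≥ c t N^{-l} V/N` on `R_N`
(`Iplus_lower`), and taking the `L²` norm over `R_N` produces the further factor `(V/N)^{1/2}`.

Throughout, `d = n + 1`, so that coordinates split as `0` and `i.succ` with `i : Fin n`.
-/

open MeasureTheory

/-- The Japanese bracket `⟨ξ⟩ = √(1+|ξ|²)`. -/
noncomputable def jb {d : ℕ} (ξ : EuclideanSpace ℝ (Fin d)) : ℝ :=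
  Real.sqrt (1 + ‖ξ‖ ^ 2)

/-- `I⁺_N(ξ)`, the non-resonant part of the second derivative of the Schrödinger
component, localized on `A_N × B_N`. -/
noncomputable def Iplus (d N : ℕ) (k l δ t : ℝ) (ξ : EuclideanSpace ℝ (Fin d)) : ℝ :=
  ∫ s in (0 : ℝ)..t, ∫ ξ₁,
    jb ξ ^ k / (jb ξ₁ ^ k * jb (ξ - ξ₁) ^ l) *
      Real.cos (s * (‖ξ‖ ^ 2 - ‖ξ₁‖ ^ 2 + ‖ξ - ξ₁‖)) *
      (boxA d N δ).indicator (fun _ => (1 : ℝ)) ξ₁ *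
      (boxB d N δ).indicator (fun _ => (1 : ℝ)) (ξ - ξ₁)

/-- The box `[a, a+p] × [b, b+q]^n` in `ℝ^{n+1}`. -/
def cylBox (n : ℕ) (a p b q : ℝ) : Set (EuclideanSpace ℝ (Fin (n + 1))) :=
  {ξ | ξ 0 ∈ Set.Icc a (a + p) ∧ ∀ i : Fin n, ξ i.succ ∈ Set.Icc b (b + q)}

lemma cylBox_eq_preimage (n : ℕ) (a p b q : ℝ) :
    cylBox n a p b q = (WithLp.ofLp : EuclideanSpace ℝ (Fin (n + 1)) → _) ⁻¹'
      Set.Icc (Fin.cons a fun _ => b : Fin (n + 1) → ℝ) (Fin.cons (a + p) fun _ => b + q) := by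
  ext ξ
  simp only [cylBox, Set.mem_ofPred_eq, Set.mem_preimage, Set.mem_Icc, Pi.le_def, Fin.forall_fin_succ,
    Fin.cons_zero, Fin.cons_succ]
  constructor
  · rintro ⟨⟨h1, h2⟩, h3⟩
    exact ⟨⟨h1, fun i => (h3 i).1⟩, h2, fun i => (h3 i).2⟩
  · rintro ⟨⟨h1, h2⟩, h3, h4⟩
    exact ⟨⟨h1, h3⟩, fun i => ⟨h2 i, h4 i⟩⟩

lemma isCompact_cylBox (n : ℕ) (a p b q : ℝ) : IsCompact (cylBox n a p b q) := by
  rw [cylBox_eq_preimage]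
  exact (PiLp.homeomorph 2 (fun _ : Fin (n + 1) => ℝ)).isCompact_preimage.2 isCompact_Icc

lemma volume_cylBox (n : ℕ) (a p b q : ℝ) (hp : 0 ≤ p) (hq : 0 ≤ q) :
    volume (cylBox n a p b q) = ENNReal.ofReal (p * q ^ n) := by
  rw [cylBox_eq_preimage, (PiLp.volume_preserving_ofLp (Fin (n + 1))).measure_preimage
    measurableSet_Icc.nullMeasurableSet, Real.volume_Icc_pi, Fin.prod_univ_succ]
  simp [ENNReal.ofReal_mul hp, ENNReal.ofReal_pow hq]

lemma mem_boxA_iff (n N : ℕ) (δ : ℝ) (ξ : EuclideanSpace ℝ (Fin (n + 1))) :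
    ξ ∈ boxA (n + 1) N δ ↔ ξ 0 ∈ Set.Icc (-(N : ℝ)) (-(N : ℝ) + δ / N) ∧
      ∀ i : Fin n, ξ i.succ ∈ Set.Icc 0 (δ / n) := by
  simp [boxA, Fin.forall_fin_succ]

lemma boxB_eq (n N : ℕ) (δ : ℝ) :
    boxB (n + 1) N δ = cylBox n (2 * N - 1) (δ / (2 * N)) 0 (δ / (2 * n)) := by
  ext ξ
  simp [boxB, cylBox, Fin.forall_fin_succ]

lemma norm_sq_succ {n : ℕ} (x : EuclideanSpace ℝ (Fin (n + 1))) :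
    ‖x‖ ^ 2 = x 0 ^ 2 + ∑ i : Fin n, x i.succ ^ 2 := by
  rw [EuclideanSpace.real_norm_sq_eq, Fin.sum_univ_succ]

lemma sum_le_of_le_div {n : ℕ} (hn : 1 ≤ n) (f : Fin n → ℝ) (c : ℝ) (h : ∀ i, f i ≤ c / n) :
    ∑ i, f i ≤ c := by
  have hn' : (n : ℝ) ≠ 0 := by positivity
  calc ∑ i, f i ≤ ∑ _i : Fin n, c / n := Finset.sum_le_sum fun i _ => h i
    _ = c := by simp; field_simp

lemma div_sq_le {n : ℕ} (hn : 1 ≤ n) (δ : ℝ) : (δ / n) ^ 2 ≤ δ ^ 2 / n := by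
  have hn' : (1 : ℝ) ≤ n := by exact_mod_cast hn
  rw [div_pow]
  gcongr
  nlinarith

/-- A frequency whose first coordinate has size comparable to `N` and whose remaining coordinates
are bounded has Japanese bracket comparable to `N`. -/
lemma jb_bounds {n N : ℕ} (hN : 3 ≤ N) (x : EuclideanSpace ℝ (Fin (n + 1)))
    (h1 : (N : ℝ) ^ 2 / 4 ≤ 1 + x 0 ^ 2) (h2 : x 0 ^ 2 ≤ 4 * (N : ℝ) ^ 2)
    (h3 : ∑ i : Fin n, x i.succ ^ 2 ≤ 1) : (N : ℝ) / 2 ≤ jb x ∧ jb x ≤ 3 * N := by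
  have hN' : (3 : ℝ) ≤ N := by exact_mod_cast hN
  have h4 : 0 ≤ ∑ i : Fin n, x i.succ ^ 2 := Finset.sum_nonneg fun i _ => sq_nonneg _
  unfold jb
  rw [norm_sq_succ]
  constructor
  · apply Real.le_sqrt_of_sq_le
    nlinarith
  · apply Real.sqrt_le_iff.2
    constructor
    · positivity
    · nlinarith

/-- The phase `|ξ|² - |ξ₁|² + |ξ - ξ₁|` lies in `[0, 7δ]` for `ξ₁ ∈ A_N`, `ξ - ξ₁ ∈ B_N`. -/
lemma phase_bounds {n N : ℕ} (hn : 1 ≤ n) (hN : 3 ≤ N) {δ : ℝ} (hδ0 : 0 < δ) (hδ1 : δ < 1)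
    (x y : EuclideanSpace ℝ (Fin (n + 1))) (hx : x ∈ boxA (n + 1) N δ)
    (hy : y ∈ boxB (n + 1) N δ) :
    0 ≤ ‖x + y‖ ^ 2 - ‖x‖ ^ 2 + ‖y‖ ∧ ‖x + y‖ ^ 2 - ‖x‖ ^ 2 + ‖y‖ ≤ 7 * δ := by
  have hN' : (3 : ℝ) ≤ N := by exact_mod_cast hN
  have hn' : (1 : ℝ) ≤ n := by exact_mod_cast hn
  rw [mem_boxA_iff] at hx
  rw [boxB_eq] at hy
  obtain ⟨⟨hx1, hx2⟩, hx3⟩ := hx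
  obtain ⟨⟨hy1, hy2⟩, hy3⟩ := hy
  have hp := div_sq_le hn δ
  have hp0 : 0 ≤ δ / n := by positivity
  have hδ2 : δ ^ 2 ≤ δ := by nlinarith only [hδ0, hδ1]
  have hhalf : δ / (2 * n) = δ / n / 2 := by field_simp
  have hT0 : 0 ≤ ∑ i : Fin n, (2 * x i.succ * y i.succ + y i.succ ^ 2) :=
    Finset.sum_nonneg fun i _ => by
      have := (hx3 i).1
      have := (hy3 i).1
      positivity
  have hT1 : ∑ i : Fin n, (2 * x i.succ * y i.succ + y i.succ ^ 2) ≤ 5 / 4 * δ ^ 2 := by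
    refine sum_le_of_le_div hn _ _ fun i => ?_
    obtain ⟨a1, a2⟩ := hx3 i
    obtain ⟨b1, b2⟩ := hy3 i
    rw [hhalf, zero_add] at b2
    rw [mul_div_assoc]
    nlinarith only [mul_le_mul a2 b2 b1 hp0, pow_le_pow_left₀ b1 b2 2, hp]
  have hY0 : 0 ≤ ∑ i : Fin n, y i.succ ^ 2 := Finset.sum_nonneg fun i _ => sq_nonneg _
  have hY1 : ∑ i : Fin n, y i.succ ^ 2 ≤ δ ^ 2 / 4 := by
    refine sum_le_of_le_div hn _ _ fun i => ?_
    obtain ⟨b1, b2⟩ := hy3 i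
    rw [hhalf, zero_add] at b2
    rw [div_right_comm]
    nlinarith only [pow_le_pow_left₀ b1 b2 2, hp]
  have hy0 : 5 ≤ y 0 := by linarith
  -- The Euclidean norm of `η` exceeds its first coordinate by at most `δ/40`.
  have hny : ‖y‖ ≤ y 0 + δ / 40 := by
    apply le_of_sq_le_sq _ (by linarith)
    rw [norm_sq_succ]
    nlinarith only [hY1, hδ2, hδ0, mul_le_mul_of_nonneg_right hy0 hδ0.le, sq_nonneg δ]
  have hny0 : y 0 ≤ ‖y‖ := by
    apply le_of_sq_le_sq _ (norm_nonneg _)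
    rw [norm_sq_succ]
    linarith
  have hdiff : ‖x + y‖ ^ 2 - ‖x‖ ^ 2 = 2 * x 0 * y 0 + y 0 ^ 2 +
      ∑ i : Fin n, (2 * x i.succ * y i.succ + y i.succ ^ 2) := by
    have e : ∑ i : Fin n, (x i.succ + y i.succ) ^ 2 = ∑ i : Fin n, x i.succ ^ 2 +
        ∑ i : Fin n, (2 * x i.succ * y i.succ + y i.succ ^ 2) := by
      rw [← Finset.sum_add_distrib]
      exact Finset.sum_congr rfl fun i _ => by ring
    rw [norm_sq_succ, norm_sq_succ]
    simp only [PiLp.add_apply]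
    rw [e]
    ring
  -- Coordinates relative to the corners: `x 0 = -N + u`, `y 0 = 2N - 1 + v`.
  obtain ⟨u, hu⟩ : ∃ u, x 0 = -N + u := ⟨x 0 + N, by ring⟩
  obtain ⟨v, hv⟩ : ∃ v, y 0 = 2 * N - 1 + v := ⟨y 0 - (2 * N - 1), by ring⟩
  have hu0 : 0 ≤ u := by linarith
  have hv0 : 0 ≤ v := by linarith
  have hu1 : N * u ≤ δ := by
    have : u ≤ δ / N := by linarith
    rw [le_div_iff₀ (by linarith)] at this
    linarith
  have hv1 : 2 * N * v ≤ δ := by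
    have : v ≤ δ / (2 * N) := by linarith
    rw [le_div_iff₀ (by linarith)] at this
    linarith
  have hfirst : 2 * x 0 * y 0 + y 0 ^ 2 + y 0
      = (4 * N - 2) * u + (2 * N - 1) * v + 2 * u * v + v ^ 2 := by
    rw [hu, hv]; ring
  have hu2 : u ≤ 1 := by nlinarith only [hu0, hu1, hN', hδ1]
  have hv2 : v ≤ 1 := by nlinarith only [hv0, hv1, hN', hδ1]
  rw [hdiff]
  constructor
  · have : 0 ≤ (4 * N - 2) * u + (2 * N - 1) * v + 2 * u * v + v ^ 2 := by
      have : (0 : ℝ) ≤ 4 * N - 2 := by linarith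
      have : (0 : ℝ) ≤ 2 * N - 1 := by linarith
      positivity
    linarith
  · have : (4 * N - 2) * u + (2 * N - 1) * v + 2 * u * v + v ^ 2 ≤ 5 * δ := by
      nlinarith only [hu1, hv1, mul_le_mul_of_nonneg_left hv2 hu0, mul_le_mul_of_nonneg_left hv2 hv0]
    nlinarith

lemma rpow_lower {r : ℝ} (h1 : 1 / 6 ≤ r) (h2 : r ≤ 6) (k : ℝ) : (6 : ℝ) ^ (-|k|) ≤ r ^ k := by
  have hr : 0 < r := by linarith
  rcases le_total 0 k with hk | hk
  · rw [abs_of_nonneg hk, Real.rpow_neg (by norm_num), ← Real.inv_rpow (by norm_num)]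
    exact Real.rpow_le_rpow (by norm_num) (by linarith) hk
  · rw [abs_of_nonpos hk, neg_neg]
    exact Real.rpow_le_rpow_of_nonpos hr h2 hk

/-- If `X`, `Y`, `Z` are all comparable to `M`, then `X^k / (Y^k Z^l)` is at least a constant
times `M^{-l}`. -/
lemma weight_lower {M X Y Z : ℝ} (hM : 0 < M) (hX : M / 2 ≤ X ∧ X ≤ 3 * M)
    (hY : M / 2 ≤ Y ∧ Y ≤ 3 * M) (hZ : M / 2 ≤ Z ∧ Z ≤ 3 * M) (k l : ℝ) :
    (6 : ℝ) ^ (-|k|) * 6 ^ (-|l|) * M ^ (-l) ≤ X ^ k / (Y ^ k * Z ^ l) := by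
  obtain ⟨hX1, hX2⟩ := hX
  obtain ⟨hY1, hY2⟩ := hY
  obtain ⟨hZ1, hZ2⟩ := hZ
  have hX0 : 0 < X := by linarith
  have hY0 : 0 < Y := by linarith
  have hZ0 : 0 < Z := by linarith
  have e : X ^ k / (Y ^ k * Z ^ l) = (X / Y) ^ k * (M / Z) ^ l * M ^ (-l) := by
    rw [Real.div_rpow hX0.le hY0.le, Real.div_rpow hM.le hZ0.le, Real.rpow_neg hM.le]
    have := (Real.rpow_pos_of_pos hM l).ne'
    field_simp
  rw [e]
  have a1 : (6 : ℝ) ^ (-|k|) ≤ (X / Y) ^ k := by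
    apply rpow_lower
    · rw [le_div_iff₀ hY0]; linarith
    · rw [div_le_iff₀ hY0]; linarith
  have a2 : (6 : ℝ) ^ (-|l|) ≤ (M / Z) ^ l := by
    apply rpow_lower
    · rw [le_div_iff₀ hZ0]; linarith
    · rw [div_le_iff₀ hZ0]; linarith
  gcongr

/-- The box `R_N` of output frequencies `ξ` for which `ξ - B_N ⊆ A_N`. -/
def boxR (n N : ℕ) (δ : ℝ) : Set (EuclideanSpace ℝ (Fin (n + 1))) :=
  cylBox n (N - 1 + δ / (2 * N)) (δ / (2 * N)) (δ / (2 * n)) (δ / (2 * n))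

lemma sub_mem_boxA {n N : ℕ} {δ : ℝ}
    {ξ x : EuclideanSpace ℝ (Fin (n + 1))} (hξ : ξ ∈ boxR n N δ)
    (hx : ξ - x ∈ boxB (n + 1) N δ) : x ∈ boxA (n + 1) N δ := by
  rw [boxB_eq] at hx
  rw [mem_boxA_iff]
  obtain ⟨⟨h1, h2⟩, h3⟩ := hξ
  obtain ⟨⟨g1, g2⟩, g3⟩ := hx
  simp only [PiLp.sub_apply] at g1 g2 g3
  have eN : δ / N = δ / (2 * N) + δ / (2 * N) := by ring
  have en : δ / n = δ / (2 * n) + δ / (2 * n) := by ring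
  refine ⟨⟨by linarith, by linarith⟩, fun i => ?_⟩
  obtain ⟨a1, a2⟩ := h3 i
  obtain ⟨b1, b2⟩ := g3 i
  exact ⟨by linarith, by linarith⟩

lemma weight_lower_on {n N : ℕ} (hn : 1 ≤ n) (hN : 3 ≤ N) {δ : ℝ} (hδ0 : 0 < δ) (hδ1 : δ < 1)
    (k l : ℝ) {ξ x : EuclideanSpace ℝ (Fin (n + 1))} (hξ : ξ ∈ boxR n N δ)
    (hx : ξ - x ∈ boxB (n + 1) N δ) :
    (6 : ℝ) ^ (-|k|) * 6 ^ (-|l|) * (N : ℝ) ^ (-l) ≤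
      jb ξ ^ k / (jb x ^ k * jb (ξ - x) ^ l) := by
  have hN' : (3 : ℝ) ≤ N := by exact_mod_cast hN
  have hxA := sub_mem_boxA hξ hx
  rw [boxB_eq] at hx
  rw [mem_boxA_iff] at hxA
  obtain ⟨⟨h1, h2⟩, h3⟩ := hξ
  obtain ⟨⟨g1, g2⟩, g3⟩ := hx
  obtain ⟨⟨f1, f2⟩, f3⟩ := hxA
  have en : δ / n = δ / (2 * n) + δ / (2 * n) := by ring
  have eN : δ / N = δ / (2 * N) + δ / (2 * N) := by ring
  have hn0 : 0 ≤ δ / (2 * n) := by positivity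
  have hN0 : 0 ≤ δ / (2 * N) := by positivity
  have hN1 : δ / N ≤ 1 / 3 := by
    rw [div_le_iff₀ (by linarith)]; linarith
  have hsum : ∀ z : EuclideanSpace ℝ (Fin (n + 1)),
      (∀ i : Fin n, 0 ≤ z i.succ ∧ z i.succ ≤ δ / n) → ∑ i : Fin n, z i.succ ^ 2 ≤ 1 := by
    intro z hz
    have : ∑ i : Fin n, z i.succ ^ 2 ≤ δ ^ 2 := sum_le_of_le_div hn _ _ fun i =>
      (pow_le_pow_left₀ (hz i).1 (hz i).2 2).trans (div_sq_le hn δ)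
    nlinarith
  refine weight_lower (by linarith) (jb_bounds hN _ ?_ ?_ (hsum _ fun i => ?_))
    (jb_bounds hN _ ?_ ?_ (hsum _ fun i => f3 i))
    (jb_bounds hN _ ?_ ?_ (hsum _ fun i => ?_)) k l
  · nlinarith
  · nlinarith
  · have := h3 i
    exact ⟨by linarith [this.1], by linarith [this.2]⟩
  · nlinarith
  · nlinarith
  · nlinarith
  · nlinarith
  · have := g3 i
    exact ⟨by linarith [this.1], by linarith [this.2]⟩

lemma continuous_jb {d : ℕ} : Continuous (jb : EuclideanSpace ℝ (Fin d) → ℝ) := by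
  unfold jb
  fun_prop

lemma jb_pos {d : ℕ} (x : EuclideanSpace ℝ (Fin d)) : 0 < jb x :=
  Real.sqrt_pos.2 (by positivity)

/-- Pointwise lower bound for `I⁺_N` on `R_N`. -/
lemma Iplus_lower {n N : ℕ} (hn : 1 ≤ n) (hN : 3 ≤ N) {δ : ℝ} (hδ0 : 0 < δ) (hδ1 : δ < 1)
    (k l : ℝ) {t : ℝ} (ht : 0 < t) (hδt : 7 * δ * t < 1)
    {ξ : EuclideanSpace ℝ (Fin (n + 1))} (hξ : ξ ∈ boxR n N δ) :
    t * ((6 : ℝ) ^ (-|k|) * 6 ^ (-|l|) * (N : ℝ) ^ (-l) * (1 / 2) *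
      (δ / (2 * N) * (δ / (2 * n)) ^ n)) ≤ Iplus (n + 1) N k l δ t ξ := by
  have hNpos : (0 : ℝ) < N := by exact_mod_cast (by omega : 0 < N)
  set S : Set (EuclideanSpace ℝ (Fin (n + 1))) := (fun x => ξ - x) ⁻¹' boxB (n + 1) N δ with hS
  have hScomp : IsCompact S := by
    rw [hS, boxB_eq]
    exact (Homeomorph.subLeft ξ).isCompact_preimage.2 (isCompact_cylBox _ _ _ _ _)
  have hSmeas : MeasurableSet S := hScomp.measurableSet
  have hSvol : volume.real S = δ / (2 * N) * (δ / (2 * n)) ^ n := by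
    have : volume S = ENNReal.ofReal (δ / (2 * N) * (δ / (2 * n)) ^ n) := by
      rw [hS, (Measure.measurePreserving_sub_left volume ξ).measure_preimage, boxB_eq,
        volume_cylBox _ _ _ _ _ (by positivity) (by positivity)]
      rw [boxB_eq]
      exact (isCompact_cylBox _ _ _ _ _).measurableSet.nullMeasurableSet
    rw [measureReal_def, this, ENNReal.toReal_ofReal (by positivity)]
  let F : ℝ → EuclideanSpace ℝ (Fin (n + 1)) → ℝ := fun s x =>
    jb ξ ^ k / (jb x ^ k * jb (ξ - x) ^ l) * Real.cos (s * (‖ξ‖ ^ 2 - ‖x‖ ^ 2 + ‖ξ - x‖))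
  have hF : Continuous F.uncurry := by
    have c1 : Continuous fun q : ℝ × EuclideanSpace ℝ (Fin (n + 1)) => jb q.2 ^ k :=
      (continuous_jb.comp continuous_snd).rpow_const fun q => Or.inl (jb_pos _).ne'
    have c2 : Continuous fun q : ℝ × EuclideanSpace ℝ (Fin (n + 1)) => jb (ξ - q.2) ^ l :=
      (continuous_jb.comp (by fun_prop)).rpow_const fun q => Or.inl (jb_pos _).ne'
    refine (continuous_const.div (c1.mul c2) fun q => ?_).mul (by fun_prop)
    exact (mul_pos (Real.rpow_pos_of_pos (jb_pos _) _) (Real.rpow_pos_of_pos (jb_pos _) _)).ne'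
  have hI : Iplus (n + 1) N k l δ t ξ = ∫ s in (0 : ℝ)..t, ∫ x in S, F s x := by
    unfold Iplus
    -- For `ξ ∈ R_N` the indicator of `A_N` is redundant.
    congr 1
    ext s
    rw [← integral_indicator hSmeas]
    congr 1
    ext x
    by_cases hx : ξ - x ∈ boxB (n + 1) N δ
    · have hxS : x ∈ S := hx
      simp [hx, hxS, sub_mem_boxA hξ hx, F]
    · have hxS : x ∉ S := hx
      simp [hx, hxS]
  rw [hI]
  set m : ℝ := (6 : ℝ) ^ (-|k|) * 6 ^ (-|l|) * (N : ℝ) ^ (-l) * (1 / 2) with hm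
  have hinner : ∀ s ∈ Set.Icc (0 : ℝ) t,
      m * (δ / (2 * N) * (δ / (2 * n)) ^ n) ≤ ∫ x in S, F s x := by
    intro s hs
    rw [← hSvol]
    refine setIntegral_ge_of_const_le_real hSmeas hScomp.measure_lt_top.ne (fun x hx => ?_) ?_
    · have hw := weight_lower_on hn hN hδ0 hδ1 k l hξ hx
      have hph := phase_bounds hn hN hδ0 hδ1 x (ξ - x) (sub_mem_boxA hξ hx) hx
      rw [add_sub_cancel] at hph
      have hcos : 1 / 2 ≤ Real.cos (s * (‖ξ‖ ^ 2 - ‖x‖ ^ 2 + ‖ξ - x‖)) := by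
        have h0 := mul_nonneg hs.1 hph.1
        have h1 : s * (‖ξ‖ ^ 2 - ‖x‖ ^ 2 + ‖ξ - x‖) ≤ 1 := by
          have := mul_le_mul hs.2 hph.2 hph.1 ht.le
          linarith
        have := Real.one_sub_sq_div_two_le_cos (x := s * (‖ξ‖ ^ 2 - ‖x‖ ^ 2 + ‖ξ - x‖))
        nlinarith
      exact mul_le_mul hw hcos (by norm_num) (le_trans (by positivity) hw)
    · exact (hF.comp (by fun_prop : Continuous fun x => (s, x))).continuousOn.integrableOn_compact
        hScomp
  have hcont : Continuous fun s => ∫ x in S, F s x :=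
    continuous_parametric_integral_of_continuous hF hScomp
  have := intervalIntegral.integral_mono_on ht.le (intervalIntegrable_const)
    (hcont.intervalIntegrable (μ := volume) 0 t) hinner
  rwa [intervalIntegral.integral_const, sub_zero, smul_eq_mul] at this

/-- Lower bound `‖I⁺_N‖_{L²} ≳ t N^{−l−3/2}` for `7δt < 1`. -/
theorem Iplus_lower_bound
    (d : ℕ) (hd : 2 ≤ d) (k l δ : ℝ) (hδ0 : 0 < δ) (hδ1 : δ < 1) :
    ∃ c > 0, ∀ N : ℕ, 3 ≤ N → ∀ t : ℝ, 0 < t → 7 * δ * t < 1 →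
      ENNReal.ofReal (c * t * (N : ℝ) ^ (-l - 3 / 2)) ≤
        eLpNorm (Iplus d N k l δ t) 2 volume := by
  obtain ⟨n, rfl⟩ : ∃ n, d = n + 1 := ⟨d - 1, by omega⟩
  have hn : 1 ≤ n := by omega
  have hn' : (0 : ℝ) < n := by exact_mod_cast hn
  set V : ℝ := δ / 2 * (δ / (2 * n)) ^ n with hV
  have hVpos : 0 < V := by positivity
  refine ⟨(6 : ℝ) ^ (-|k|) * 6 ^ (-|l|) * (1 / 2) * (V * V ^ (1 / 2 : ℝ)), by positivity, ?_⟩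
  intro N hN t ht hδt
  have hNpos : (0 : ℝ) < N := by exact_mod_cast (by omega : 0 < N)
  have hVN : δ / (2 * N) * (δ / (2 * n)) ^ n = V / N := by rw [hV]; ring
  set C : ℝ := t * ((6 : ℝ) ^ (-|k|) * 6 ^ (-|l|) * (N : ℝ) ^ (-l) * (1 / 2) * (V / N)) with hC
  have hCpos : 0 < C := by positivity
  have hmono : eLpNorm ((boxR n N δ).indicator fun _ => C) 2 volume ≤
      eLpNorm (Iplus (n + 1) N k l δ t) 2 volume := by
    refine eLpNorm_mono fun ξ => ?_
    by_cases hξ : ξ ∈ boxR n N δ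
    · have := Iplus_lower hn hN hδ0 hδ1 k l ht hδt hξ
      rw [hVN] at this
      rw [Set.indicator_of_mem hξ, Real.norm_of_nonneg hCpos.le]
      exact this.trans (Real.le_norm_self _)
    · simp [hξ]
  refine le_trans (le_of_eq ?_) hmono
  rw [boxR, eLpNorm_indicator_const (isCompact_cylBox _ _ _ _ _).measurableSet (by norm_num)
    (by norm_num), volume_cylBox _ _ _ _ _ (by positivity) (by positivity), hVN,
    Real.enorm_eq_ofReal hCpos.le, ENNReal.toReal_ofNat,
    ENNReal.ofReal_rpow_of_nonneg (by positivity) (by norm_num), ← ENNReal.ofReal_mul hCpos.le]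
  congr 1
  have e : (N : ℝ) ^ (-l - 3 / 2) = (N : ℝ) ^ (-l) * ((N : ℝ) * (N : ℝ) ^ (1 / 2 : ℝ))⁻¹ := by
    rw [show -l - 3 / 2 = -l + -(1 + 1 / 2) by ring, Real.rpow_add hNpos,
      Real.rpow_neg hNpos.le (1 + 1 / 2), Real.rpow_add hNpos 1, Real.rpow_one]
  rw [e, hC, Real.div_rpow hVpos.le hNpos.le]
  have := (Real.rpow_pos_of_pos hNpos (1 / 2)).ne'
  field_simp
end

section
/- Let d ≥ 2 and k, l ∈ ℝ. For 0 < δ < 1 and a natural number N ≥ 3, define A_N = [−N, −N+δ/N] × [0, δ/(d−1)]^{d−1} and B_N = [2N−1, 2N−1+δ/(2N)] × [0, δ/(2(d−1))]^{d−1} in ℝ^d, and for t > 0 define I⁻_N(ξ) = ∫₀ᵗ ∫_{ℝ^d} (⟨ξ⟩^k / (⟨ξ₁⟩^k ⟨ξ−ξ₁⟩^l)) · cos(s(|ξ|² − |ξ₁|² − |ξ−ξ₁|)) · χ_{A_N}(ξ₁) χ_{B_N}(ξ−ξ₁) dξ₁ ds. Then there exists a constant C > 0, depending only on d, k, l and δ,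 such that for all N ≥ 3 and all t > 0, one has ‖I⁻_N‖_{L²(ℝ^d)} ≤ C · N^{−l−5/2}. -/
/-! For `ξ₁ ∈ A_N` and `ξ - ξ₁ ∈ B_N` the phase `|ξ|² - |ξ₁|² - |ξ - ξ₁|` equals
`(N - 1)² - N² - (2N - 1) = -4N + 2` up to a bounded error, so it has absolute value at least `N / 2`,
while `⟨ξ⟩`, `⟨ξ₁⟩` and `⟨ξ - ξ₁⟩` are all comparable to `N` (`interaction`). Hence the weight is
`O(N^{-l})` (`weight_le`). By Fubini one may integrate in time first, and `∫₀ᵗ cos (s ω) ds` is bounded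
by `1 / |ω| ≤ 2 / N` uniformly in `t` (`abs_osc_le`); the remaining integral over `A_N` contributes
its volume, `O(1 / N)`. This gives the pointwise bound `|I⁻_N(ξ)| ≲ N^{-l-2}` (`abs_Iminus_le`).
Finally `I⁻_N` is supported in `A_N + B_N`, a set of volume `O(1 / N)`, which contributes the last
factor `N^{-1/2}` to the `L²` norm. -/

open MeasureTheory

/-- `I⁻_N(ξ)`, the resonant part of the second derivative of the Schrödinger
component, localized on `A_N × B_N`. -/
noncomputable def Iminus (d N : ℕ) (k l δ t : ℝ) (ξ : EuclideanSpace ℝ (Fin d)) : ℝ :=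
  ∫ s in (0 : ℝ)..t, ∫ ξ₁,
    jb ξ ^ k / (jb ξ₁ ^ k * jb (ξ - ξ₁) ^ l) *
      Real.cos (s * (‖ξ‖ ^ 2 - ‖ξ₁‖ ^ 2 - ‖ξ - ξ₁‖)) *
      (boxA d N δ).indicator (fun _ => (1 : ℝ)) ξ₁ *
      (boxB d N δ).indicator (fun _ => (1 : ℝ)) (ξ - ξ₁)

/-! ### Volume and measurability of the boxes -/

/-- The box `[a, a + h] × [0, 2]^n` in `ℝ^{n+1}`. Slabs of this form contain `A_N` and `A_N + B_N`
and have a simple volume. -/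
def slab (n : ℕ) (a h : ℝ) : Set (EuclideanSpace ℝ (Fin (n + 1))) :=
  {ξ | ∀ j : Fin (n + 1), ξ j ∈ if j = 0 then Set.Icc a (a + h) else Set.Icc (0 : ℝ) 2}

lemma slab_eq (n : ℕ) (a h : ℝ) :
    slab n a h = (WithLp.ofLp : EuclideanSpace ℝ (Fin (n + 1)) → _) ⁻¹'
      (Set.univ.pi fun j : Fin (n + 1) =>
        if j = 0 then Set.Icc a (a + h) else Set.Icc (0 : ℝ) 2) := by
  ext ξ
  simp only [slab, Set.mem_ofPred_eq, Set.mem_preimage, Set.mem_univ_pi]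

lemma measurableSet_slab_aux (n : ℕ) (a h : ℝ) :
    MeasurableSet (Set.univ.pi fun j : Fin (n + 1) =>
        if j = 0 then Set.Icc a (a + h) else Set.Icc (0 : ℝ) 2) := by
  refine MeasurableSet.univ_pi fun j => ?_
  split_ifs <;> exact measurableSet_Icc

lemma measurableSet_slab (n : ℕ) (a h : ℝ) : MeasurableSet (slab n a h) := by
  rw [slab_eq]
  exact (PiLp.volume_preserving_ofLp (Fin (n + 1))).measurable (measurableSet_slab_aux n a h)

lemma volume_slab (n : ℕ) (a : ℝ) {h : ℝ} (hh : 0 ≤ h) :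
    volume (slab n a h) = ENNReal.ofReal (h * 2 ^ n) := by
  rw [slab_eq, (PiLp.volume_preserving_ofLp (Fin (n + 1))).measure_preimage
    (measurableSet_slab_aux n a h).nullMeasurableSet, volume_pi_pi, Fin.prod_univ_succ]
  simp [Fin.succ_ne_zero, ENNReal.ofReal_mul hh, ENNReal.ofReal_pow]

lemma measurable_jb {d : ℕ} : Measurable (jb : EuclideanSpace ℝ (Fin d) → ℝ) := by
  unfold jb
  fun_prop

lemma measurableSet_boxA (d N : ℕ) (δ : ℝ) : MeasurableSet (boxA d N δ) := by
  unfold boxA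
  rw [Set.ofPred_forall]
  refine MeasurableSet.iInter fun j => ?_
  by_cases hj : (j : ℕ) = 0
  · simp only [hj, if_true]
    exact measurableSet_Icc.preimage (by fun_prop)
  · simp only [hj, if_false]
    exact measurableSet_Icc.preimage (by fun_prop)

lemma measurableSet_boxB (d N : ℕ) (δ : ℝ) : MeasurableSet (boxB d N δ) := by
  unfold boxB
  rw [Set.ofPred_forall]
  refine MeasurableSet.iInter fun j => ?_
  by_cases hj : (j : ℕ) = 0
  · simp only [hj, if_true]
    exact measurableSet_Icc.preimage (by fun_prop)
  · simp only [hj, if_false]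
    exact measurableSet_Icc.preimage (by fun_prop)

/-! ### Size of the weight and of the phase -/

lemma rpow_comparable {x y : ℝ} (hx : 0 < x) (h1 : x / 4 ≤ y) (h2 : y ≤ 4 * x) (k : ℝ) :
    y ^ k ≤ 4 ^ |k| * x ^ k := by
  have hy : 0 < y := by linarith
  rcases le_total 0 k with hk | hk
  · rw [abs_of_nonneg hk, ← Real.mul_rpow (by norm_num) hx.le]
    exact Real.rpow_le_rpow hy.le h2 hk
  · have h4 : (4 : ℝ) ^ |k| = (1 / 4 : ℝ) ^ k := by
      rw [abs_of_nonpos hk, Real.rpow_neg (by norm_num), one_div, Real.inv_rpow (by norm_num)]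
    rw [h4, ← Real.mul_rpow (by norm_num) hx.le]
    exact Real.rpow_le_rpow_of_nonpos (by positivity) (by linarith) hk

lemma jb_comparable {d : ℕ} (ξ : EuclideanSpace ℝ (Fin d)) {x : ℝ} (hx : 3 ≤ x)
    (h1 : (x / 4) ^ 2 ≤ ‖ξ‖ ^ 2) (h2 : ‖ξ‖ ^ 2 ≤ 16 * x ^ 2 - 1) :
    x / 4 ≤ jb ξ ∧ jb ξ ≤ 4 * x := by
  unfold jb
  constructor
  · exact Real.le_sqrt_of_sq_le (by linarith)
  · exact Real.sqrt_le_iff.2 ⟨by linarith, by nlinarith⟩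

/-- The frequency weight is of size `x ^ (-l)` when all three brackets are of size `x`: the two
powers with exponent `k` cancel. -/
lemma weight_le {a b c x : ℝ} (hx : 0 < x) (ha : x / 4 ≤ a ∧ a ≤ 4 * x)
    (hb : x / 4 ≤ b ∧ b ≤ 4 * x) (hc : x / 4 ≤ c ∧ c ≤ 4 * x) (k l : ℝ) :
    a ^ k / (b ^ k * c ^ l) ≤ 4 ^ |k| * 4 ^ |k| * 4 ^ |l| * x ^ (-l) := by
  have hb0 : 0 < b := by linarith [hb.1]
  have hc0 : 0 < c := by linarith [hc.1]
  have h1 := rpow_comparable hx ha.1 ha.2 k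
  have h2 := rpow_comparable hx hb.1 hb.2 (-k)
  have h3 := rpow_comparable hx hc.1 hc.2 (-l)
  rw [abs_neg] at h2 h3
  have e : a ^ k / (b ^ k * c ^ l) = a ^ k * b ^ (-k) * c ^ (-l) := by
    rw [Real.rpow_neg hb0.le, Real.rpow_neg hc0.le, div_eq_mul_inv, mul_inv, mul_assoc]
  have e2 : x ^ k * x ^ (-k) = 1 := by rw [← Real.rpow_add hx]; simp
  calc a ^ k / (b ^ k * c ^ l) = a ^ k * b ^ (-k) * c ^ (-l) := e
    _ ≤ (4 ^ |k| * x ^ k) * (4 ^ |k| * x ^ (-k)) * (4 ^ |l| * x ^ (-l)) := by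
        gcongr
    _ = 4 ^ |k| * 4 ^ |k| * 4 ^ |l| * x ^ (-l) * (x ^ k * x ^ (-k)) := by ring
    _ = _ := by rw [e2, mul_one]

lemma norm_sq_bounds {n : ℕ} (ξ : EuclideanSpace ℝ (Fin (n + 1))) {c : ℝ}
    (h : ∀ j : Fin n, 0 ≤ ξ j.succ ∧ ξ j.succ ≤ c) :
    ξ 0 ^ 2 ≤ ‖ξ‖ ^ 2 ∧ ‖ξ‖ ^ 2 ≤ ξ 0 ^ 2 + n * c ^ 2 := by
  rw [EuclideanSpace.real_norm_sq_eq, Fin.sum_univ_succ]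
  constructor
  · have : 0 ≤ ∑ j : Fin n, ξ j.succ ^ 2 := Finset.sum_nonneg fun j _ => sq_nonneg _
    linarith
  · have : ∑ j : Fin n, ξ j.succ ^ 2 ≤ ∑ _j : Fin n, c ^ 2 :=
      Finset.sum_le_sum fun j _ => pow_le_pow_left₀ (h j).1 (h j).2 2
    simp at this
    linarith

/-- Geometry of the interaction: on the support of the integrand all three frequencies have size
comparable to `N`, and the phase,
which is `(N - 1)² - N² - (2N - 1) = -4N + 2` up to a bounded error, is at most `-N / 2`. -/
lemma interaction {n N : ℕ} (hn : 1 ≤ n) (hN : 3 ≤ N) {δ : ℝ} (hδ0 : 0 < δ) (hδ1 : δ < 1)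
    {ξ ξ₁ : EuclideanSpace ℝ (Fin (n + 1))} (hA : ξ₁ ∈ boxA (n + 1) N δ)
    (hB : ξ - ξ₁ ∈ boxB (n + 1) N δ) :
    ((N / 4 : ℝ) ≤ jb ξ ∧ jb ξ ≤ 4 * N) ∧ ((N / 4 : ℝ) ≤ jb ξ₁ ∧ jb ξ₁ ≤ 4 * N) ∧
    ((N / 4 : ℝ) ≤ jb (ξ - ξ₁) ∧ jb (ξ - ξ₁) ≤ 4 * N) ∧
    (N / 2 : ℝ) ≤ |‖ξ‖ ^ 2 - ‖ξ₁‖ ^ 2 - ‖ξ - ξ₁‖| ∧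
    ξ₁ ∈ slab n (-N) (2 / N) ∧ ξ ∈ slab n (N - 1) (2 / N) := by
  have hx : (3 : ℝ) ≤ N := by exact_mod_cast hN
  have hn' : (1 : ℝ) ≤ n := by exact_mod_cast hn
  obtain ⟨x, hxdef⟩ : ∃ x : ℝ, x = (N : ℝ) := ⟨_, rfl⟩
  rw [← hxdef] at hx ⊢
  have hx0 : 0 < x := by linarith
  have hA0 := hA 0
  have hB0 := hB 0
  have hAs := fun j : Fin n => hA j.succ
  have hBs := fun j : Fin n => hB j.succ
  simp only [Fin.val_zero, if_true, Set.mem_Icc, PiLp.sub_apply, Fin.val_succ, Nat.succ_ne_zero,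
    if_false, Nat.cast_add, Nat.cast_one, add_sub_cancel_right, ← hxdef] at hA0 hB0 hAs hBs
  obtain ⟨e, he⟩ : ∃ e, e = δ / x := ⟨_, rfl⟩
  obtain ⟨c, hc⟩ : ∃ c, c = δ / n := ⟨_, rfl⟩
  have he2 : δ / (2 * x) = e / 2 := by rw [he]; field_simp
  have hc2 : δ / (2 * n) = c / 2 := by rw [hc]; field_simp
  have hex : e * x = δ := by rw [he]; field_simp
  have hcn : c * n = δ := by rw [hc]; field_simp
  have he0 : 0 < e := by rw [he]; positivity
  have hc0 : 0 < c := by rw [hc]; positivity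
  have hc1 : c ≤ 1 := by nlinarith
  have he1 : e ≤ 1 / 3 := by nlinarith
  have h1x : e ≤ 1 / x := by rw [he]; gcongr
  have hnc : n * c ^ 2 ≤ 1 := by nlinarith
  rw [← he] at hA0
  rw [he2] at hB0
  simp only [← hc] at hAs
  simp only [hc2] at hBs
  have n1 := norm_sq_bounds ξ₁ hAs
  have n2 := norm_sq_bounds (ξ - ξ₁) (c := c / 2) (by simpa using hBs)
  have n3 := norm_sq_bounds ξ (c := 3 * c / 2)
    (fun j => ⟨by linarith [(hAs j).1, (hBs j).1], by linarith [(hAs j).2, (hBs j).2]⟩)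
  rw [PiLp.sub_apply] at n2
  obtain ⟨u, hu⟩ : ∃ u, u = ξ 0 := ⟨_, rfl⟩
  obtain ⟨v, hv⟩ : ∃ v, v = ξ₁ 0 := ⟨_, rfl⟩
  rw [← hv] at hA0 n1
  rw [← hu, ← hv] at hB0 n2
  rw [← hu] at n3
  have hu1 : x - 1 ≤ u := by linarith [hA0.1, hB0.1]
  have hu2 : u ≤ x - 1 + 3 / 2 * e := by linarith [hA0.2, hB0.2]
  have hxx : 3 * x ≤ x ^ 2 := by rw [sq]; exact mul_le_mul_of_nonneg_right hx hx0.le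
  have hee : e ^ 2 ≤ 1 / 3 * e := by rw [sq]; exact mul_le_mul_of_nonneg_right he1 he0.le
  have U1 : (x - 1) ^ 2 ≤ u ^ 2 := pow_le_pow_left₀ (by linarith) hu1 2
  have U2 : u ^ 2 ≤ (x - 1) ^ 2 + 13 / 4 :=
    (pow_le_pow_left₀ (by linarith) hu2 2).trans (by linarith)
  have V1 : x ^ 2 - 2 ≤ v ^ 2 := by
    have h : (x - e) ^ 2 ≤ (-v) ^ 2 :=
      pow_le_pow_left₀ (by linarith) (by linarith [hA0.2]) 2
    linarith [sq_nonneg e]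
  have V2 : v ^ 2 ≤ x ^ 2 := by
    have h : (-v) ^ 2 ≤ x ^ 2 :=
      pow_le_pow_left₀ (by linarith [hA0.2]) (by linarith [hA0.1]) 2
    linarith
  have W1 : (2 * x - 1) ^ 2 ≤ (u - v) ^ 2 := pow_le_pow_left₀ (by linarith) hB0.1 2
  have W2 : (u - v) ^ 2 ≤ (2 * x) ^ 2 := pow_le_pow_left₀ (by linarith) (by linarith [hB0.2]) 2
  obtain ⟨n1l, n1u⟩ := n1
  obtain ⟨n2l, n2u⟩ := n2
  obtain ⟨n3l, n3u⟩ := n3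
  have hq : 2 * x - 1 ≤ ‖ξ - ξ₁‖ :=
    le_of_sq_le_sq (W1.trans n2l) (norm_nonneg _)
  refine ⟨jb_comparable _ hx ?_ ?_, jb_comparable _ hx ?_ ?_, jb_comparable _ hx ?_ ?_, ?_, ?_, ?_⟩
  · linarith
  · linarith
  · linarith
  · linarith
  · linarith
  · linarith
  · rw [abs_of_nonpos] <;> linarith
  · have : 2 / x = 2 * (1 / x) := by ring
    intro j
    refine Fin.cases ?_ (fun i => ?_) j
    · simp only [if_true, Set.mem_Icc, ← hv]
      constructor <;> linarith [hA0.1, hA0.2]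
    · simp only [Fin.succ_ne_zero, if_false, Set.mem_Icc]
      constructor <;> linarith [(hAs i).1, (hAs i).2]
  · have : 2 / x = 2 * (1 / x) := by ring
    intro j
    refine Fin.cases ?_ (fun i => ?_) j
    · simp only [if_true, Set.mem_Icc, ← hu]
      constructor <;> linarith
    · simp only [Fin.succ_ne_zero, if_false, Set.mem_Icc]
      constructor <;> linarith [(hAs i).1, (hAs i).2, (hBs i).1, (hBs i).2]

/-! ### Integration in time and the pointwise bound -/

lemma abs_integral_cos_le {a t : ℝ} (ha : a ≠ 0) :
    |∫ s in (0 : ℝ)..t, Real.cos (s * a)| ≤ 1 / |a| := by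
  rw [intervalIntegral.integral_comp_mul_right _ ha, integral_cos]
  simp only [zero_mul, Real.sin_zero, sub_zero, smul_eq_mul, abs_mul, abs_inv, one_div]
  exact mul_le_of_le_one_right (by positivity) (Real.abs_sin_le_one _)

/-- Nonresonant time oscillation: if the phase is at least `c` in absolute value on the support of
the amplitude, integrating in time first gains a factor `1 / c`, uniformly in the final time. -/
lemma abs_osc_le {E : Type*} [MeasureSpace E] [SFinite (volume : Measure E)] {w φ : E → ℝ}
    {S : Set E} (hS : MeasurableSet S) (hSf : volume S ≠ ⊤) (hw : Measurable w)
    (hφ : Measurable φ) {M c : ℝ} (hc : 0 < c)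
    (hwM : ∀ y, |w y| ≤ S.indicator (fun _ => M) y) (hwφ : ∀ y, w y ≠ 0 → c ≤ |φ y|) (t : ℝ) :
    |∫ s in (0 : ℝ)..t, ∫ y, w y * Real.cos (s * φ y)| ≤ M / c * volume.real S := by
  have hint : Integrable (S.indicator fun _ => M) (volume : Measure E) :=
    (integrable_indicator_iff hS).2 (integrableOn_const hSf)
  have hprod : Integrable (Function.uncurry fun (s : ℝ) (y : E) => w y * Real.cos (s * φ y))
      ((volume.restrict (Set.uIoc 0 t)).prod volume) := by
    have hone : Integrable (fun _ : ℝ => (1 : ℝ)) (volume.restrict (Set.uIoc 0 t)) :=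
      integrableOn_const (by simp [Set.uIoc])
    refine (hone.mul_prod hint).mono' ?_ (Filter.Eventually.of_forall fun p => ?_)
    · apply Measurable.aestronglyMeasurable
      unfold Function.uncurry
      fun_prop
    · simp only [Function.uncurry, Real.norm_eq_abs, abs_mul, one_mul]
      exact (mul_le_of_le_one_right (abs_nonneg _) (Real.abs_cos_le_one _)).trans (hwM _)
  rw [intervalIntegral_integral_swap hprod]
  have hpt : ∀ y, ‖∫ s in (0 : ℝ)..t, w y * Real.cos (s * φ y)‖ ≤
      S.indicator (fun _ => M / c) y := by
    intro y
    have hSy : S.indicator (fun _ => M / c) y = S.indicator (fun _ => M) y * (1 / c) := by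
      by_cases hy : y ∈ S <;> simp [hy, div_eq_mul_inv]
    rw [intervalIntegral.integral_const_mul, Real.norm_eq_abs, abs_mul, hSy]
    by_cases h0 : w y = 0
    · have := hwM y
      rw [h0, abs_zero] at this ⊢
      rw [zero_mul]
      positivity
    · have hcy := hwφ y h0
      have hne : φ y ≠ 0 := by
        intro h
        rw [h, abs_zero] at hcy
        linarith
      refine mul_le_mul (hwM y) ((abs_integral_cos_le hne).trans ?_) (abs_nonneg _)
        ((abs_nonneg _).trans (hwM y))
      exact one_div_le_one_div_of_le hc hcy
  have hint' : Integrable (S.indicator fun _ => M / c) (volume : Measure E) :=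
    (integrable_indicator_iff hS).2 (integrableOn_const hSf)
  refine (norm_integral_le_of_norm_le hint' (Filter.Eventually.of_forall hpt)).trans ?_
  rw [integral_indicator hS, setIntegral_const, smul_eq_mul, mul_comm]

lemma abs_Iminus_le {n N : ℕ} (hn : 1 ≤ n) (hN : 3 ≤ N) {δ : ℝ} (hδ0 : 0 < δ) (hδ1 : δ < 1)
    (k l t : ℝ) (ξ : EuclideanSpace ℝ (Fin (n + 1))) :
    ‖Iminus (n + 1) N k l δ t ξ‖ ≤ (slab n (N - 1) (2 / N)).indicator
      (fun _ => 4 ^ |k| * 4 ^ |k| * 4 ^ |l| * (N : ℝ) ^ (-l) / (N / 2) * (2 / N * 2 ^ n)) ξ := by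
  have hN0 : (0 : ℝ) < N := by exact_mod_cast (by omega : 0 < N)
  let w : EuclideanSpace ℝ (Fin (n + 1)) → ℝ := fun ξ₁ =>
    jb ξ ^ k / (jb ξ₁ ^ k * jb (ξ - ξ₁) ^ l) *
      (boxA (n + 1) N δ).indicator (fun _ => (1 : ℝ)) ξ₁ *
      (boxB (n + 1) N δ).indicator (fun _ => (1 : ℝ)) (ξ - ξ₁)
  have hsupp : ∀ y, w y ≠ 0 → y ∈ boxA (n + 1) N δ ∧ ξ - y ∈ boxB (n + 1) N δ := by
    intro y hy
    constructor
    · by_contra h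
      exact hy (by simp [w, h])
    · by_contra h
      exact hy (by simp [w, h])
  have hI : Iminus (n + 1) N k l δ t ξ = ∫ s in (0 : ℝ)..t, ∫ y,
      w y * Real.cos (s * (‖ξ‖ ^ 2 - ‖y‖ ^ 2 - ‖ξ - y‖)) := by
    unfold Iminus
    congr! 4
    simp only [w]
    ring
  by_cases hξ : ξ ∈ slab n (N - 1) (2 / N)
  · rw [Set.indicator_of_mem hξ, hI, Real.norm_eq_abs]
    have hvol : volume.real (slab n (-N) (2 / N)) = 2 / N * 2 ^ n := by
      rw [Measure.real, volume_slab _ _ (by positivity), ENNReal.toReal_ofReal (by positivity)]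
    rw [← hvol]
    have hjb := measurable_jb (d := n + 1)
    refine abs_osc_le (measurableSet_slab _ _ _) ?_ ?_ ?_ (by positivity) (fun y => ?_)
      (fun y hy => ?_) t
    · rw [volume_slab _ _ (by positivity)]
      exact ENNReal.ofReal_ne_top
    · have hA : Measurable ((boxA (n + 1) N δ).indicator fun _ => (1 : ℝ)) :=
        measurable_const.indicator (measurableSet_boxA _ _ _)
      have hB : Measurable ((boxB (n + 1) N δ).indicator fun _ => (1 : ℝ)) :=
        measurable_const.indicator (measurableSet_boxB _ _ _)
      have hsub : Measurable fun y : EuclideanSpace ℝ (Fin (n + 1)) => ξ - y := by fun_prop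
      exact ((((hjb.pow_const k).mul ((hjb.comp hsub).pow_const l)).const_div _).mul hA).mul
        (hB.comp hsub)
    · fun_prop
    · by_cases hy : w y = 0
      · rw [hy, abs_zero]
        exact Set.indicator_nonneg (fun _ _ => by positivity) _
      · obtain ⟨hyA, hyB⟩ := hsupp y hy
        obtain ⟨h1, h2, h3, -, h4, -⟩ := interaction hn hN hδ0 hδ1 hyA hyB
        have hwy : w y = jb ξ ^ k / (jb y ^ k * jb (ξ - y) ^ l) := by simp [w, hyA, hyB]
        rw [Set.indicator_of_mem h4, hwy, abs_of_nonneg]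
        · exact weight_le hN0 h1 h2 h3 k l
        · unfold jb
          positivity
    · obtain ⟨hyA, hyB⟩ := hsupp y hy
      exact (interaction hn hN hδ0 hδ1 hyA hyB).2.2.2.1
  · have hw0 : ∀ y, w y = 0 := fun y => by
      by_contra hy
      obtain ⟨hyA, hyB⟩ := hsupp y hy
      exact hξ (interaction hn hN hδ0 hδ1 hyA hyB).2.2.2.2.2
    rw [Set.indicator_of_notMem hξ, hI]
    simp [hw0]

/-- Upper bound `‖I⁻_N‖_{L²} ≲ N^{−l−5/2}`, uniformly in `t > 0`. -/
theorem Iminus_upper_bound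
    (d : ℕ) (hd : 2 ≤ d) (k l δ : ℝ) (hδ0 : 0 < δ) (hδ1 : δ < 1) :
    ∃ C > 0, ∀ N : ℕ, 3 ≤ N → ∀ t : ℝ, 0 < t →
      eLpNorm (Iminus d N k l δ t) 2 volume ≤
        ENNReal.ofReal (C * (N : ℝ) ^ (-l - 5 / 2)) := by
  obtain ⟨n, rfl⟩ : ∃ n, d = n + 1 := ⟨d - 1, by omega⟩
  have hn : 1 ≤ n := by omega
  refine ⟨4 ^ |k| * 4 ^ |k| * 4 ^ |l| * (4 * 2 ^ n) * (2 * 2 ^ n) ^ (1 / 2 : ℝ), by positivity,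
    fun N hN t _ => ?_⟩
  have hN0 : (0 : ℝ) < N := by exact_mod_cast (by omega : 0 < N)
  refine (eLpNorm_mono_real (abs_Iminus_le hn hN hδ0 hδ1 k l t)).trans ?_
  refine (eLpNorm_indicator_const_le _ _).trans ?_
  rw [volume_slab _ _ (by positivity), Real.enorm_eq_ofReal (by positivity),
    ENNReal.ofReal_rpow_of_nonneg (by positivity) (by positivity),
    ← ENNReal.ofReal_mul (by positivity)]
  refine ENNReal.ofReal_le_ofReal (le_of_eq ?_)
  have e1 : (2 / N * 2 ^ n : ℝ) = 2 * 2 ^ n * (N : ℝ)⁻¹ := by ring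
  have e2 : (N : ℝ) ^ (-l - 5 / 2) =
      (N : ℝ) ^ (-l) * ((N : ℝ)⁻¹ * (N : ℝ)⁻¹ * ((N : ℝ)⁻¹) ^ (1 / 2 : ℝ)) := by
    rw [Real.inv_rpow hN0.le, ← Real.rpow_neg hN0.le, ← Real.rpow_neg_one,
      ← Real.rpow_add hN0, ← Real.rpow_add hN0, ← Real.rpow_add hN0]
    norm_num
    ring_nf
  simp only [ENNReal.toReal_ofNat]
  rw [e2, e1, Real.mul_rpow (by positivity) (by positivity)]
  field_simp
  ring
end

section
/- Let d ≥ 2, let N ≥ 3 be a natural number and let 0 < δ < 1. Define A′_N = [N, N+δ/N] × [0, δ/(d−1)]^{d−1} and C_N = [N+1−δ/(2N), N+1] × [0, δ/(2(d−1))]^{d−1} in ℝ^d. Then for every ξ₁ ∈ A′_N and ξ₂ ∈ C_N, the resonance quantities ζ₊ = |ξ₁|² − |ξ₂|² + |ξ₁+ξ₂| and ζ₋ = |ξ₁|² − |ξ₂|² − |ξ₁+ξ₂| satisfy ζ₊ ∈ (−δ, 7δ) and ζ₋ ∈ (−7N, −N). -/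
/-- The box `A′_N = [N, N+δ/N] × [0, δ/(d−1)]^{d−1}` in `ℝ^d`. -/
def boxA' (d N : ℕ) (δ : ℝ) : Set (EuclideanSpace ℝ (Fin d)) :=
  {ξ | ∀ j : Fin d,
    if (j : ℕ) = 0 then ξ j ∈ Set.Icc (N : ℝ) ((N : ℝ) + δ / N)
    else ξ j ∈ Set.Icc 0 (δ / ((d : ℝ) - 1))}

/-- The box `C_N = −B′_N = [N+1−δ/(2N), N+1] × [0, δ/(2(d−1))]^{d−1}` in `ℝ^d`. -/
def boxC (d N : ℕ) (δ : ℝ) : Set (EuclideanSpace ℝ (Fin d)) :=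
  {ξ | ∀ j : Fin d,
    if (j : ℕ) = 0 then ξ j ∈ Set.Icc ((N : ℝ) + 1 - δ / (2 * N)) ((N : ℝ) + 1)
    else ξ j ∈ Set.Icc 0 (δ / (2 * ((d : ℝ) - 1)))}

/-!
Split each vector into its first coordinate and the transverse rest. With
`a = N + s`, `b = N + 1 - t` the first coordinates, where `0 ≤ s ≤ δ / N` and `0 ≤ t ≤ δ / (2N)`,
the choice of boxes gives `a² - b² = (s + t - 1)(a + b)`, so that
`a² - b² + (a + b) = (s + t)(a + b)` is nonnegative and at most `4δ`.
The transverse parts contribute at most `δ²` and `δ²/4` to `‖ξ₁‖²` and `‖ξ₂‖²`, and `9δ²/4` to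
`‖ξ₁ + ξ₂‖²`; since `a + b` is large, `a + b ≤ ‖ξ₁ + ξ₂‖ ≤ a + b + δ`. This gives the bound for `ζ₊`,
and `ζ₋ = ζ₊ - 2 ‖ξ₁ + ξ₂‖` with `‖ξ₁ + ξ₂‖ ≈ 2N + 1` gives the one for `ζ₋`.
-/

/-- The Euclidean norm of a transverse vector whose `n + 1` entries lie in `[0, c / (n + 1)]`
is at most `c`. -/
lemma sum_sq_le_of_mem_Icc (n : ℕ) (c : ℝ) (f : Fin (n + 1) → ℝ)
    (hf : ∀ i, f i ∈ Set.Icc 0 (c / ((n : ℝ) + 1))) :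
    ∑ i, f i ^ 2 ≤ c ^ 2 := by
  have hn : (1 : ℝ) ≤ (n : ℝ) + 1 := by linarith [Nat.cast_nonneg (α := ℝ) n]
  calc ∑ i, f i ^ 2 ≤ ∑ _i : Fin (n + 1), (c / ((n : ℝ) + 1)) ^ 2 :=
        Finset.sum_le_sum fun i _ => pow_le_pow_left₀ (hf i).1 (hf i).2 2
    _ = c ^ 2 / ((n : ℝ) + 1) := by
        rw [Finset.sum_const, Finset.card_univ, Fintype.card_fin, nsmul_eq_mul]
        push_cast
        field_simp
    _ ≤ c ^ 2 := div_le_self (sq_nonneg c) hn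

/-- The estimate in terms of the first coordinates `a`, `b`, the squared transverse norms
`P`, `Q`, `R` of `ξ₁`, `ξ₂`, `ξ₁ + ξ₂`, and `S = ‖ξ₁ + ξ₂‖`. -/
lemma zeta_bounds_scalar (N δ a b P Q R S : ℝ) (hN' : 3 ≤ N) (hδ0 : 0 < δ) (hδ1 : δ < 1)
    (ha1 : N ≤ a) (ha2 : a ≤ N + δ / N) (hb1 : N + 1 - δ / (2 * N) ≤ b) (hb2 : b ≤ N + 1)
    (hP0 : 0 ≤ P) (hP1 : P ≤ δ ^ 2) (hQ0 : 0 ≤ Q) (hQ1 : Q ≤ (δ / 2) ^ 2)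
    (hR0 : 0 ≤ R) (hR1 : R ≤ (δ + δ / 2) ^ 2) (hS0 : 0 ≤ S) (e3 : S ^ 2 = (a + b) ^ 2 + R) :
    a ^ 2 + P - (b ^ 2 + Q) + S ∈ Set.Ioo (-δ) (7 * δ) ∧
    a ^ 2 + P - (b ^ 2 + Q) - S ∈ Set.Ioo (-(7 * N)) (-N) := by
  -- `ε = δ / N` satisfies `ε N = δ` and `ε ≤ δ / 3`.
  have hNpos : 0 < N := by linarith
  obtain ⟨ε, hε⟩ : ∃ ε, ε = δ / N := ⟨_, rfl⟩
  have hεN : ε * N = δ := by rw [hε]; field_simp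
  have hε2 : δ / (2 * N) = ε / 2 := by rw [hε]; field_simp
  have hε0 : 0 < ε := by rw [hε]; positivity
  have hε3 : 3 * ε ≤ δ := by nlinarith
  rw [hε2] at hb1
  rw [← hε] at ha2
  have hδ2 : δ ^ 2 < δ := by nlinarith
  have hab : 6 ≤ a + b := by linarith
  have hS1 : a + b ≤ S := abs_le_of_sq_le_sq' (by linarith) hS0 |>.2
  have hS2 : S ≤ a + b + δ :=
    (abs_le_of_sq_le_sq' (by nlinarith) (by linarith)).2
  have key : a ^ 2 - b ^ 2 + (a + b) = (a - b + 1) * (a + b) := by ring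
  have k0 : 0 ≤ (a - b + 1) * (a + b) := mul_nonneg (by linarith) (by linarith)
  have k1 : (a - b + 1) * (a + b) ≤ 4 * δ :=
    calc (a - b + 1) * (a + b) ≤ (3 / 2 * ε) * (2 * N + 1 + ε) :=
          mul_le_mul (by linarith) (by linarith) (by linarith) (by linarith)
      _ = 3 * (ε * N) + 3 / 2 * ε * (1 + ε) := by ring
      _ ≤ 4 * δ := by rw [hεN]; nlinarith
  refine ⟨⟨?_, ?_⟩, ?_, ?_⟩ <;> linarith

/-- On `A′_N × C_N` the resonances `ζ_± = |ξ₁|² − |ξ₂|² ± |ξ₁+ξ₂|` satisfy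
`ζ₊ ∈ (−δ, 7δ)` and `ζ₋ ∈ (−7N, −N)`. -/
theorem zeta_bounds
    (d N : ℕ) (hd : 2 ≤ d) (hN : 3 ≤ N)
    (δ : ℝ) (hδ0 : 0 < δ) (hδ1 : δ < 1)
    (ξ₁ ξ₂ : EuclideanSpace ℝ (Fin d))
    (h₁ : ξ₁ ∈ boxA' d N δ) (h₂ : ξ₂ ∈ boxC d N δ) :
    ‖ξ₁‖ ^ 2 - ‖ξ₂‖ ^ 2 + ‖ξ₁ + ξ₂‖ ∈ Set.Ioo (-δ) (7 * δ) ∧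
    ‖ξ₁‖ ^ 2 - ‖ξ₂‖ ^ 2 - ‖ξ₁ + ξ₂‖ ∈ Set.Ioo (-(7 * (N : ℝ))) (-(N : ℝ)) := by
  obtain ⟨n, rfl⟩ : ∃ n, d = n + 2 := ⟨d - 2, by omega⟩
  have hd1 : ((n + 2 : ℕ) : ℝ) - 1 = (n : ℝ) + 1 := by push_cast; ring
  have hN' : (3 : ℝ) ≤ N := by exact_mod_cast hN
  have hP : ∀ i : Fin (n + 1), ξ₁ i.succ ∈ Set.Icc 0 (δ / ((n : ℝ) + 1)) := fun i => by
    have h := h₁ i.succ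
    rwa [if_neg (by simp), hd1] at h
  have hQ : ∀ i : Fin (n + 1), ξ₂ i.succ ∈ Set.Icc 0 (δ / 2 / ((n : ℝ) + 1)) := fun i => by
    have h := h₂ i.succ
    rwa [if_neg (by simp), hd1, ← div_div] at h
  have hR : ∀ i : Fin (n + 1),
      ξ₁ i.succ + ξ₂ i.succ ∈ Set.Icc 0 ((δ + δ / 2) / ((n : ℝ) + 1)) := fun i => by
    rw [add_div]
    exact ⟨add_nonneg (hP i).1 (hQ i).1, add_le_add (hP i).2 (hQ i).2⟩
  have hP1 := sum_sq_le_of_mem_Icc n _ _ hP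
  have hQ1 := sum_sq_le_of_mem_Icc n _ _ hQ
  have hR1 := sum_sq_le_of_mem_Icc n _ _ hR
  have hP0 : 0 ≤ ∑ i : Fin (n + 1), ξ₁ i.succ ^ 2 := Finset.sum_nonneg fun i _ => sq_nonneg _
  have hQ0 : 0 ≤ ∑ i : Fin (n + 1), ξ₂ i.succ ^ 2 := Finset.sum_nonneg fun i _ => sq_nonneg _
  have hR0 : 0 ≤ ∑ i : Fin (n + 1), (ξ₁ i.succ + ξ₂ i.succ) ^ 2 :=
    Finset.sum_nonneg fun i _ => sq_nonneg _
  have e1 : ‖ξ₁‖ ^ 2 = ξ₁ 0 ^ 2 + ∑ i : Fin (n + 1), ξ₁ i.succ ^ 2 := by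
    rw [EuclideanSpace.real_norm_sq_eq, Fin.sum_univ_succ]
  have e2 : ‖ξ₂‖ ^ 2 = ξ₂ 0 ^ 2 + ∑ i : Fin (n + 1), ξ₂ i.succ ^ 2 := by
    rw [EuclideanSpace.real_norm_sq_eq, Fin.sum_univ_succ]
  have e3 : ‖ξ₁ + ξ₂‖ ^ 2 =
      (ξ₁ 0 + ξ₂ 0) ^ 2 + ∑ i : Fin (n + 1), (ξ₁ i.succ + ξ₂ i.succ) ^ 2 := by
    rw [EuclideanSpace.real_norm_sq_eq, Fin.sum_univ_succ]
    simp only [PiLp.add_apply]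
  have ha : ξ₁ 0 ∈ Set.Icc (N : ℝ) ((N : ℝ) + δ / N) := by
    have h := h₁ 0
    rwa [if_pos (by simp)] at h
  have hb : ξ₂ 0 ∈ Set.Icc ((N : ℝ) + 1 - δ / (2 * N)) ((N : ℝ) + 1) := by
    have h := h₂ 0
    rwa [if_pos (by simp)] at h
  rw [e1, e2]
  exact zeta_bounds_scalar N δ _ _ _ _ _ _ hN' hδ0 hδ1 ha.1 ha.2 hb.1 hb.2 hP0 hP1 hQ0 hQ1
    hR0 hR1 (norm_nonneg _) e3
end

section
/- Let d ≥ 2, k ∈ ℝ, l > 2k − 1/2 and fix t > 0. Then there is no constant C > 0 such that for all bounded measurable sets A, B ⊆ ℝ^d one has ‖ ∫₀ᵗ ∫_{ℝ^d} (⟨ξ⟩^l |ξ| / (⟨ξ₁⟩^k ⟨ξ−ξ₁⟩^k)) · ( e^{i(t|ξ| − sζ₊)} − e^{−i(t|ξ| + sζ₋)} ) · χ_A(ξ₁) χ_{−B}(ξ−ξ₁) dξ₁ ds ‖_{L²_ξ(ℝ^d)} ≤ C · |A|^{1/2} |B|^{1/2}, where ζ_± = |ξ₁|² − |ξ−ξ₁|²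 ± |ξ|. (This is the quantitative content of the case l > 2k − 1/2 of the C² ill-posedness of the flow map of the Zakharov system at the origin of H^k × H^l × H^{l−1}.) -/
/-!
The estimate fails because of a resonant high-frequency interaction. For large `N` take `ξ₁` in a
thin box `A` around `N e`, with `e` a coordinate vector, of half-width `δ / N` in the direction
`e` and `δ` in the others, and `ξ - ξ₁` in the box `-B` around `(N + 1) e` with doubled widths.
The output frequency `ξ` is restricted to a translate `S` of `A` around `(2 N + 1) e`; then
`ξ - ξ₁ ∈ -B` holds automatically for `ξ ∈ S` and `ξ₁ ∈ A`.

Since `|ξ₁|² - |ξ - ξ₁|² = ξ · (2 ξ₁ - ξ)` and `2 ξ₁ - ξ ≈ -e`, the phase `ζ₊` is `O(δ)` on these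
boxes (`resonance_bound`). With `δ` small depending on `t` and `d`, the first exponential contributes
coherently, whereas the second one, whose phase relative to the first is `2 (t - s) |ξ| ~ (t - s) N`,
averages out in `s`. After multiplication by `exp (-i t |ξ|)` the real part of the `s`-integral is
at least `t / 2` times the integral of the weight over `A` (`oscillatory_lower_bound`).

The weight is at least a constant times `N ^ (l + 1 - 2 k)` (`weight_lower_bound`), and
`|A| = |S| = v`, `|B| = 2 ^ d v` with `v = (2 δ) ^ d / N`. So the estimate would give
`N ^ (l + 1 - 2 k) v · v ^ (1/2) ≲ v`, that is, `N ^ (l + 1/2 - 2 k) ≲ 1` uniformly in `N`, which is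
false for `l > 2 k - 1/2`.
-/

open MeasureTheory

/-! ### The oscillatory integral near resonance -/

/-- Relative to the common factor `exp (i t R)`, the two exponentials have phases `-s ζ` and
`-(2 (t - s) R + s ζ)`, where `ζ = q + R` is the resonance function. -/
lemma re_rotated_phase (t R s q w : ℝ) :
    (Complex.exp (((-(t * R) : ℝ) : ℂ) * Complex.I) * ((w : ℂ) *
      (Complex.exp (Complex.I * ((t * R - s * (q + R) : ℝ) : ℂ)) -
        Complex.exp (-Complex.I * ((t * R + s * (q - R) : ℝ) : ℂ))))).re =
      w * (Real.cos (s * (q + R)) - Real.cos (2 * (t - s) * R + s * (q + R))) := by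
  have e1 : Complex.exp (((-(t * R) : ℝ) : ℂ) * Complex.I) *
      Complex.exp (Complex.I * ((t * R - s * (q + R) : ℝ) : ℂ)) =
      Complex.exp (((-(s * (q + R)) : ℝ) : ℂ) * Complex.I) := by
    rw [← Complex.exp_add]; congr 1; push_cast; ring
  have e2 : Complex.exp (((-(t * R) : ℝ) : ℂ) * Complex.I) *
      Complex.exp (-Complex.I * ((t * R + s * (q - R) : ℝ) : ℂ)) =
      Complex.exp (((-(2 * (t - s) * R + s * (q + R)) : ℝ) : ℂ) * Complex.I) := by
    rw [← Complex.exp_add]; congr 1; push_cast; ring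
  rw [mul_left_comm, mul_sub, e1, e2, Complex.re_ofReal_mul, Complex.sub_re,
    Complex.exp_ofReal_mul_I_re, Complex.exp_ofReal_mul_I_re, Real.cos_neg, Real.cos_neg]

/-- If `t |ζ|` is small, the phase `s ζ` can be dropped at a total cost of `1 / 4`. The remaining
lower bound does not involve `ζ`, hence is independent of the variable `ξ₁`. -/
lemma phase_lower_bound {t s R ζ : ℝ} (hs : s ∈ Set.Icc 0 t) (hζ : t * |ζ| ≤ 1 / 8) :
    3 / 4 - Real.cos (2 * (t - s) * R) ≤
      Real.cos (s * ζ) - Real.cos (2 * (t - s) * R + s * ζ) := by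
  have h0 : |s * ζ| ≤ 1 / 8 := by
    rw [abs_mul, abs_of_nonneg hs.1]
    exact (mul_le_mul_of_nonneg_right hs.2 (abs_nonneg _)).trans hζ
  have h1 := Real.abs_cos_sub_cos_le 0 (s * ζ)
  have h2 := Real.abs_cos_sub_cos_le (2 * (t - s) * R + s * ζ) (2 * (t - s) * R)
  rw [Real.cos_zero, zero_sub, abs_neg] at h1
  rw [add_sub_cancel_left] at h2
  have h3 := le_abs_self (1 - Real.cos (s * ζ))
  have h4 := le_abs_self (Real.cos (2 * (t - s) * R + s * ζ) - Real.cos (2 * (t - s) * R))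
  linarith

/-- The cosine integrates to `sin (2 t R) / (2 R)`, which is at most `t / 4` if `t R ≥ 2`. -/
lemma integral_phase_lower {t R : ℝ} (hR : 0 < R) (htR : 2 ≤ t * R) :
    t / 2 ≤ ∫ s in (0 : ℝ)..t, (3 / 4 - Real.cos (2 * (t - s) * R)) := by
  have hder : ∀ s ∈ Set.uIcc 0 t,
      HasDerivAt (fun s => 3 / 4 * s + Real.sin (2 * (t - s) * R) / (2 * R))
        (3 / 4 - Real.cos (2 * (t - s) * R)) s := by
    intro s _
    have h1 : HasDerivAt (fun s : ℝ => 2 * (t - s) * R) (-(2 * R)) s := by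
      have := (((hasDerivAt_id s).const_sub t).const_mul 2).mul_const R
      exact this.congr_deriv (by ring)
    have h2 := ((hasDerivAt_id s).const_mul (3 / 4)).add (h1.sin.div_const (2 * R))
    refine h2.congr_deriv ?_
    field_simp
    ring
  rw [intervalIntegral.integral_eq_sub_of_hasDerivAt hder
    ((by fun_prop : Continuous fun s => 3 / 4 - Real.cos (2 * (t - s) * R)).intervalIntegrable _ _)]
  have h3 : Real.sin (2 * (t - 0) * R) / (2 * R) ≤ t / 4 := by
    rw [div_le_iff₀ (by positivity)]
    nlinarith [Real.sin_le_one (2 * (t - 0) * R)]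
  simp only [sub_self, mul_zero, zero_mul, Real.sin_zero, zero_div]
  linarith

/-- Lower bound for the oscillatory integral when the resonance function `q + R` is small on `A` and
the weight `W` is at least `m` there. The real part is estimated pointwise in `s` before
integrating, so the two integrals need not be interchanged; continuity in `s` of the inner integral
guarantees that the outer one is not a junk value. -/
lemma oscillatory_lower_bound {d : ℕ} {A : Set (EuclideanSpace ℝ (Fin d))} (hA : IsCompact A)
    {W q : EuclideanSpace ℝ (Fin d) → ℝ} (hW : Continuous W) (hq : Continuous q)
    {m t R : ℝ} (hm : 0 ≤ m) (ht : 0 < t) (hR : 0 < R) (htR : 2 ≤ t * R)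
    (hmW : ∀ x ∈ A, m ≤ W x) (hres : ∀ x ∈ A, t * |q x + R| ≤ 1 / 8) :
    m * (volume A).toReal * (t / 2) ≤
      ‖∫ s in (0 : ℝ)..t, ∫ x in A, ((W x : ℝ) : ℂ) *
        (Complex.exp (Complex.I * ((t * R - s * (q x + R) : ℝ) : ℂ)) -
          Complex.exp (-Complex.I * ((t * R + s * (q x - R) : ℝ) : ℂ)))‖ := by
  set g : ℝ → EuclideanSpace ℝ (Fin d) → ℂ := fun s x => ((W x : ℝ) : ℂ) *
        (Complex.exp (Complex.I * ((t * R - s * (q x + R) : ℝ) : ℂ)) -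
          Complex.exp (-Complex.I * ((t * R + s * (q x - R) : ℝ) : ℂ))) with hg
  have hgc : Continuous (Function.uncurry g) := by
    simp only [hg, Function.uncurry_def]
    fun_prop
  have hG : Continuous fun s => ∫ x in A, g s x :=
    continuous_parametric_integral_of_continuous hgc hA
  have hgs : ∀ s, IntegrableOn (g s) A := fun s =>
    (by fun_prop : Continuous (g s)).continuousOn.integrableOn_compact hA
  have hWi : IntegrableOn W A := hW.continuousOn.integrableOn_compact hA
  -- the real part after removing the common factor `exp (i t R)`
  let L : ℂ →L[ℝ] ℝ := Complex.reCLM.comp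
    (ContinuousLinearMap.mul ℝ ℂ (Complex.exp (((-(t * R) : ℝ) : ℂ) * Complex.I)))
  have hL : ∀ z, L z = (Complex.exp (((-(t * R) : ℝ) : ℂ) * Complex.I) * z).re := fun z => rfl
  have hLn : ∀ z, L z ≤ ‖z‖ := by
    intro z
    rw [hL]
    refine (Complex.re_le_norm _).trans ?_
    rw [norm_mul, Complex.norm_exp_ofReal_mul_I, one_mul]
  have hinner : ∀ s ∈ Set.Icc 0 t,
      (∫ x in A, W x) * (3 / 4 - Real.cos (2 * (t - s) * R)) ≤ L (∫ x in A, g s x) := by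
    intro s hs
    rw [← L.integral_comp_comm (hgs s), ← integral_mul_const]
    refine setIntegral_mono_on (hWi.mul_const _) (L.integrable_comp (hgs s))
      hA.measurableSet fun x hx => ?_
    rw [hL, hg]
    simp only
    rw [re_rotated_phase]
    exact mul_le_mul_of_nonneg_left (phase_lower_bound hs (hres x hx)) (hm.trans (hmW x hx))
  have hM : m * (volume A).toReal ≤ ∫ x in A, W x := by
    have h := setIntegral_mono_on (f := fun _ => m) (integrableOn_const hA.measure_lt_top.ne)
      hWi hA.measurableSet hmW
    rw [setIntegral_const, smul_eq_mul, mul_comm] at h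
    exact h
  have hM0 : 0 ≤ ∫ x in A, W x := le_trans (by positivity) hM
  calc m * (volume A).toReal * (t / 2)
      ≤ (∫ x in A, W x) * ∫ s in (0 : ℝ)..t, (3 / 4 - Real.cos (2 * (t - s) * R)) :=
        mul_le_mul hM (integral_phase_lower hR htR) (by positivity) hM0
    _ = ∫ s in (0 : ℝ)..t, (∫ x in A, W x) * (3 / 4 - Real.cos (2 * (t - s) * R)) :=
        (intervalIntegral.integral_const_mul _ _).symm
    _ ≤ ∫ s in (0 : ℝ)..t, L (∫ x in A, g s x) :=
        intervalIntegral.integral_mono_on ht.le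
          ((by fun_prop : Continuous fun s =>
            (∫ x in A, W x) * (3 / 4 - Real.cos (2 * (t - s) * R))).intervalIntegrable _ _)
          ((L.continuous.comp hG).intervalIntegrable _ _) hinner
    _ = L (∫ s in (0 : ℝ)..t, ∫ x in A, g s x) :=
        L.intervalIntegral_comp_comm (hG.intervalIntegrable _ _)
    _ ≤ _ := hLn _

/-! ### Boxes in Euclidean space -/

/-- The closed box with centre `c` and half-widths `w` in the Euclidean space `ℝ^d`. -/
def rbox {d : ℕ} (c w : Fin d → ℝ) : Set (EuclideanSpace ℝ (Fin d)) :=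
  {x | ∀ j, |x j - c j| ≤ w j}

lemma rbox_eq_preimage {d : ℕ} (c w : Fin d → ℝ) :
    rbox c w = WithLp.ofLp ⁻¹' Set.Icc (c - w) (c + w) := by
  ext x
  simp only [rbox, Set.mem_ofPred_eq, Set.mem_preimage, Set.mem_Icc, Pi.le_def, Pi.sub_apply,
    Pi.add_apply, abs_le, ← forall_and]
  refine forall_congr' fun j => ?_
  constructor <;> rintro ⟨h1, h2⟩ <;> constructor <;> linarith

lemma isCompact_rbox {d : ℕ} (c w : Fin d → ℝ) : IsCompact (rbox c w) := by
  rw [rbox_eq_preimage]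
  exact Metric.isCompact_of_isClosed_isBounded
    (isClosed_Icc.preimage (PiLp.continuous_ofLp 2 _))
    ((PiLp.antilipschitzWith_ofLp 2 _).isBounded_preimage (Metric.isBounded_Icc _ _))

lemma volume_rbox {d : ℕ} (c w : Fin d → ℝ) (hw : ∀ j, 0 ≤ w j) :
    volume (rbox c w) = ENNReal.ofReal (∏ j, 2 * w j) := by
  rw [rbox_eq_preimage, (PiLp.volume_preserving_ofLp (Fin d)).measure_preimage
    measurableSet_Icc.nullMeasurableSet, Real.volume_Icc_pi,
    ENNReal.ofReal_prod_of_nonneg fun j _ => by linarith [hw j]]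
  refine Finset.prod_congr rfl fun j _ => ?_
  congr 1
  simp only [Pi.sub_apply, Pi.add_apply]
  ring

/-- The volume of the box with half-widths `δ / N` in the direction `i` and `δ` in the others. -/
lemma prod_widths {d : ℕ} (i : Fin d) (N δ : ℝ) :
    ∏ j, 2 * (if j = i then δ / N else δ) = (2 * δ) ^ d / N := by
  have h : ∀ j, 2 * (if j = i then δ / N else δ) = 2 * δ * (if j = i then N⁻¹ else 1) := by
    intro j; split_ifs
    · rw [div_eq_mul_inv]; ring
    · ring
  simp only [h, Finset.prod_mul_distrib, Finset.prod_const, Finset.card_univ, Fintype.card_fin,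
    Finset.prod_ite_eq', Finset.mem_univ, if_true]
  rw [mul_pow, div_eq_mul_inv]

/-! ### Size of the weight and of the frequencies -/

/-- Powers of a quantity comparable to `N`, with an exponent of either sign. -/
lemma rpow_comparable_s16 {x N p : ℝ} (hN : 0 < N) (h1 : N / 4 ≤ x) (h2 : x ≤ 4 * N) :
    4 ^ (-|p|) * N ^ p ≤ x ^ p ∧ x ^ p ≤ 4 ^ |p| * N ^ p := by
  have hx : 0 < x := by linarith
  have e1 : (4 * N) ^ p = 4 ^ p * N ^ p := Real.mul_rpow (by norm_num) hN.le
  have e2 : (N / 4) ^ p = 4 ^ (-p) * N ^ p := by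
    rw [Real.div_rpow hN.le (by norm_num), Real.rpow_neg (by norm_num)]; field_simp
  rcases le_total 0 p with hp | hp
  · rw [abs_of_nonneg hp, ← e1, ← e2]
    exact ⟨Real.rpow_le_rpow (by positivity) h1 hp, Real.rpow_le_rpow hx.le h2 hp⟩
  · rw [abs_of_nonpos hp, neg_neg, ← e1, ← e2]
    exact ⟨Real.rpow_le_rpow_of_nonpos hx h2 hp, Real.rpow_le_rpow_of_nonpos (by positivity) h1 hp⟩

lemma weight_lower_bound {N a R b c k l : ℝ} (hN : 0 < N) (ha1 : N / 4 ≤ a) (ha2 : a ≤ 4 * N)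
    (hR : N / 4 ≤ R) (hb1 : N / 4 ≤ b) (hb2 : b ≤ 4 * N) (hc1 : N / 4 ≤ c) (hc2 : c ≤ 4 * N) :
    (4 ^ (-|l|) * (1 / 4) * (4 ^ (-|k|) * 4 ^ (-|k|))) * N ^ (l + 1 - 2 * k) ≤
      a ^ l * R / (b ^ k * c ^ k) := by
  have ha := (rpow_comparable_s16 (p := l) hN ha1 ha2).1
  have hb := (rpow_comparable_s16 (p := k) hN hb1 hb2).2
  have hc := (rpow_comparable_s16 (p := k) hN hc1 hc2).2
  have hb0 : 0 < b := by linarith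
  have hc0 : 0 < c := by linarith
  have ha0 : 0 < a := by linarith
  have e : (4 ^ (-|l|) * (1 / 4) * (4 ^ (-|k|) * 4 ^ (-|k|))) * N ^ (l + 1 - 2 * k) =
      (4 ^ (-|l|) * N ^ l) * (N / 4) / ((4 ^ |k| * N ^ k) * (4 ^ |k| * N ^ k)) := by
    rw [Real.rpow_sub hN, Real.rpow_add hN, Real.rpow_one, two_mul, Real.rpow_add hN,
      Real.rpow_neg (by norm_num) |k|]
    field_simp
  have hR0 : 0 < R := by linarith
  have : 0 ≤ a ^ l * R := by positivity
  rw [e]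
  gcongr

lemma coord_bounds {d : ℕ} (i : Fin d) {x : EuclideanSpace ℝ (Fin d)} {ε : ℝ}
    (hx : ∀ j ≠ i, |x j| ≤ ε) :
    (x i) ^ 2 ≤ ‖x‖ ^ 2 ∧ ‖x‖ ^ 2 ≤ (x i) ^ 2 + d * ε ^ 2 := by
  have h : ‖x‖ ^ 2 = (x i) ^ 2 + ∑ j ∈ Finset.univ.erase i, (x j) ^ 2 := by
    rw [EuclideanSpace.norm_sq_eq, ← Finset.add_sum_erase _ _ (Finset.mem_univ i)]
    simp
  have h0 : 0 ≤ ∑ j ∈ Finset.univ.erase i, (x j) ^ 2 := Finset.sum_nonneg fun _ _ => sq_nonneg _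
  have h1 : ∑ j ∈ Finset.univ.erase i, (x j) ^ 2 ≤ d * ε ^ 2 := by
    calc _ ≤ ∑ j ∈ Finset.univ.erase i, ε ^ 2 := Finset.sum_le_sum fun j hj =>
            sq_le_sq' (by linarith [(abs_le.1 (hx j (Finset.ne_of_mem_erase hj))).1])
              (abs_le.1 (hx j (Finset.ne_of_mem_erase hj))).2
      _ ≤ ∑ j : Fin d, ε ^ 2 :=
        Finset.sum_le_sum_of_subset_of_nonneg (Finset.erase_subset _ _) fun _ _ _ => sq_nonneg _
      _ = d * ε ^ 2 := by simp
  constructor <;> linarith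

/-- All frequencies in the three boxes have size comparable to `N`. -/
lemma size_bounds {d : ℕ} (i : Fin d) {x : EuclideanSpace ℝ (Fin d)} {N : ℝ}
    (hN : d + 4 ≤ N) (h1 : N - 2 ≤ x i) (h2 : x i ≤ 2 * N + 2) (hx : ∀ j ≠ i, |x j| ≤ 2) :
    (N / 4 ≤ jb x ∧ jb x ≤ 4 * N) ∧ N / 4 ≤ ‖x‖ := by
  obtain ⟨h3, h4⟩ := coord_bounds i hx
  have hd : (0 : ℝ) ≤ d := Nat.cast_nonneg d
  have h5 : N / 4 ≤ ‖x‖ := by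
    have : x i ≤ ‖x‖ := le_of_sq_le_sq h3 (norm_nonneg x)
    linarith
  refine ⟨⟨?_, ?_⟩, h5⟩
  · exact Real.le_sqrt_of_sq_le (by nlinarith)
  · refine Real.sqrt_le_iff.2 ⟨by linarith, ?_⟩
    nlinarith

lemma continuous_jb_rpow {d : ℕ} (p : ℝ) :
    Continuous fun x : EuclideanSpace ℝ (Fin d) => jb x ^ p := by
  have h : Continuous fun x : EuclideanSpace ℝ (Fin d) => jb x := by unfold jb; fun_prop
  exact h.rpow_const fun x => Or.inl (Real.sqrt_pos.2 (by positivity)).ne'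

/-! ### Resonance -/

/-- Smallness of the resonance function `ζ₊`. In the direction `i`, the factor `2 ξ₁ - ξ` equals `-1`
up to `3 δ / N`, so that `ξ i * (2 ξ₁ i - ξ i)` cancels `|ξ| ≈ ξ i` up to `O(δ)`; the transversal
coordinates contribute `O(d δ²)`. -/
lemma resonance_bound {d : ℕ} (i : Fin d) {x ξ : EuclideanSpace ℝ (Fin d)} {N δ : ℝ}
    (hN : 4 ≤ N) (hδ : 0 < δ) (hδ1 : δ ≤ 1)
    (hxi : |x i - N| ≤ δ / N) (hξi : |ξ i - (2 * N + 1)| ≤ δ / N)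
    (hx : ∀ j ≠ i, |x j| ≤ δ) (hξ : ∀ j ≠ i, |ξ j| ≤ δ) :
    |‖x‖ ^ 2 - ‖ξ - x‖ ^ 2 + ‖ξ‖| ≤ (4 * d + 12) * δ := by
  have hd : (0 : ℝ) ≤ d := Nat.cast_nonneg d
  have hN0 : 0 < N := by linarith
  have hrN : δ / N * N = δ := div_mul_cancel₀ _ hN0.ne'
  have hr0 : 0 ≤ δ / N := by positivity
  have hr1 : δ / N ≤ 1 := by rw [div_le_one hN0]; linarith
  obtain ⟨hx1, hx2⟩ := abs_le.1 hxi
  obtain ⟨hξ1, hξ2⟩ := abs_le.1 hξi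
  -- the transversal part of `|ξ₁|² - |ξ - ξ₁|² = ξ · (2 ξ₁ - ξ)`
  have hsplit : ‖x‖ ^ 2 - ‖ξ - x‖ ^ 2 = ξ i * (2 * x i - ξ i) +
      ∑ j ∈ Finset.univ.erase i, ξ j * (2 * x j - ξ j) := by
    rw [Finset.add_sum_erase _ (fun j => ξ j * (2 * x j - ξ j)) (Finset.mem_univ i),
      EuclideanSpace.norm_sq_eq, EuclideanSpace.norm_sq_eq, ← Finset.sum_sub_distrib]
    refine Finset.sum_congr rfl fun j _ => ?_
    simp only [Real.norm_eq_abs, sq_abs, PiLp.sub_apply]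
    ring
  have hrest : |∑ j ∈ Finset.univ.erase i, ξ j * (2 * x j - ξ j)| ≤ d * (3 * δ ^ 2) := by
    calc _ ≤ ∑ j ∈ Finset.univ.erase i, |ξ j * (2 * x j - ξ j)| := Finset.abs_sum_le_sum_abs _ _
      _ ≤ ∑ j ∈ Finset.univ.erase i, 3 * δ ^ 2 := by
        refine Finset.sum_le_sum fun j hj => ?_
        have h1 := hx j (Finset.ne_of_mem_erase hj)
        have h2 := hξ j (Finset.ne_of_mem_erase hj)
        have h3 : |2 * x j - ξ j| ≤ 3 * δ := by
          rw [abs_le] at *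
          constructor <;> linarith [h1.1, h1.2, h2.1, h2.2]
        rw [abs_mul]
        calc _ ≤ δ * (3 * δ) := mul_le_mul h2 h3 (abs_nonneg _) hδ.le
          _ = _ := by ring
      _ ≤ ∑ j : Fin d, 3 * δ ^ 2 :=
        Finset.sum_le_sum_of_subset_of_nonneg (Finset.erase_subset _ _) fun _ _ _ => by positivity
      _ = _ := by simp
  obtain ⟨h1, h2⟩ := coord_bounds i hξ
  have hle : ξ i ≤ ‖ξ‖ := le_of_sq_le_sq h1 (norm_nonneg ξ)
  have hge : ‖ξ‖ - ξ i ≤ d * δ ^ 2 := by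
    nlinarith [mul_nonneg (sub_nonneg.2 hle) (by linarith : 0 ≤ ‖ξ‖ + ξ i - 1)]
  have he : |(2 * x i - ξ i + 1) * ξ i| ≤ 12 * δ := by
    rw [abs_mul]
    have h3 : |2 * x i - ξ i + 1| ≤ 3 * (δ / N) := by
      rw [abs_le]; constructor <;> linarith
    have h4 : |ξ i| ≤ 4 * N := by
      rw [abs_le]; constructor <;> linarith
    calc _ ≤ 3 * (δ / N) * (4 * N) := mul_le_mul h3 h4 (abs_nonneg _) (by positivity)
      _ = 12 * (δ / N * N) := by ring
      _ = _ := by rw [hrN]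
  have hδ2 : d * δ ^ 2 ≤ d * δ := by
    refine mul_le_mul_of_nonneg_left ?_ hd
    nlinarith
  rw [hsplit]
  rw [abs_le] at *
  constructor <;> nlinarith [hrest.1, hrest.2, he.1, he.2]

/-! ### Failure of the bilinear estimate -/

/-- Case `l > 2k − 1/2` of the `C²` ill-posedness of the flow map of the
Zakharov system: the bilinear estimate coming from the second Gâteaux
derivative of the wave component `n` fails. -/
theorem flow_map_not_C2_high_l
    (d : ℕ) (hd : 2 ≤ d) (k l : ℝ) (hl : 2 * k - 1 / 2 < l) (t : ℝ) (ht : 0 < t) :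
    ¬ ∃ C > 0, ∀ A B : Set (EuclideanSpace ℝ (Fin d)),
      MeasurableSet A → MeasurableSet B →
      Bornology.IsBounded A → Bornology.IsBounded B →
      eLpNorm
        (fun ξ => ∫ s in (0 : ℝ)..t, ∫ ξ₁,
          ((jb ξ ^ l * ‖ξ‖ / (jb ξ₁ ^ k * jb (ξ - ξ₁) ^ k) : ℝ) : ℂ) *
            (Complex.exp (Complex.I *
                ((t * ‖ξ‖ - s * (‖ξ₁‖ ^ 2 - ‖ξ - ξ₁‖ ^ 2 + ‖ξ‖) : ℝ) : ℂ)) -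
              Complex.exp (-Complex.I *
                ((t * ‖ξ‖ + s * (‖ξ₁‖ ^ 2 - ‖ξ - ξ₁‖ ^ 2 - ‖ξ‖) : ℝ) : ℂ))) *
            ((A.indicator (fun _ => (1 : ℝ)) ξ₁ : ℝ) : ℂ) *
            (((-B).indicator (fun _ => (1 : ℝ)) (ξ - ξ₁) : ℝ) : ℂ)) 2 volume ≤
      ENNReal.ofReal (C * (volume A).toReal ^ (1 / 2 : ℝ) *
        (volume B).toReal ^ (1 / 2 : ℝ)) := by
  rintro ⟨C, hC, H⟩
  let i : Fin d := ⟨0, by omega⟩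
  have hd0 : (0 : ℝ) ≤ d := Nat.cast_nonneg d
  obtain ⟨δ, hδ, hδ1, hδt⟩ : ∃ δ : ℝ, 0 < δ ∧ δ ≤ 1 ∧ t * ((4 * d + 12) * δ) ≤ 1 / 8 := by
    refine ⟨1 / (1 + 8 * t * (4 * d + 12)), by positivity, ?_, ?_⟩
    · rw [div_le_one (by positivity)]
      have : 0 ≤ 8 * t * (4 * d + 12) := by positivity
      linarith
    · rw [mul_one_div, mul_div_assoc', div_le_div_iff₀ (by positivity) (by norm_num)]
      linarith
  set K : ℝ := 4 ^ (-|l|) * (1 / 4) * (4 ^ (-|k|) * 4 ^ (-|k|)) with hK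
  have hK0 : 0 < K := by positivity
  set D : ℝ := ((2 * δ) ^ d) ^ (1 / 2 : ℝ) with hD
  have hD0 : 0 < D := by positivity
  set Q : ℝ := C * ((2 : ℝ) ^ d) ^ (1 / 2 : ℝ) / (K * (t / 2) * D) with hQ
  obtain ⟨N, hNd, hNt, hNQ⟩ : ∃ N : ℝ, d + 4 ≤ N ∧ 8 / t ≤ N ∧ Q < N ^ (l + 1 / 2 - 2 * k) :=
    ((Filter.eventually_ge_atTop _).and ((Filter.eventually_ge_atTop _).and
      ((tendsto_rpow_atTop (by linarith : 0 < l + 1 / 2 - 2 * k)).eventually_gt_atTop Q))).exists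
  have hN4 : 4 ≤ N := by linarith
  have hN0 : 0 < N := by linarith
  have hr0 : 0 ≤ δ / N := by positivity
  have hr1 : δ / N ≤ 1 / 2 := by rw [div_le_iff₀ hN0]; linarith
  -- `cen m` is `m e` with `e` the `i`-th coordinate vector
  let cen : ℝ → Fin d → ℝ := fun m j => if j = i then m else 0
  let w : Fin d → ℝ := fun j => if j = i then δ / N else δ
  have hw : ∀ j, 0 ≤ w j := fun j => by simp only [w]; split_ifs <;> linarith
  have hmem : ∀ {m : ℝ} {x : EuclideanSpace ℝ (Fin d)}, x ∈ rbox (cen m) w →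
      |x i - m| ≤ δ / N ∧ ∀ j ≠ i, |x j| ≤ δ := by
    intro m x hx
    refine ⟨by simpa [cen, w] using hx i, fun j hj => by simpa [cen, w, hj] using hx j⟩
  set A := rbox (cen N) w with hA
  set B' := rbox (cen (N + 1)) (fun j => 2 * w j) with hB'
  set S := rbox (cen (2 * N + 1)) w with hS
  have hSAB : ∀ ξ ∈ S, ∀ x ∈ A, ξ - x ∈ B' := by
    intro ξ hξ x hx j
    have h1 := abs_le.1 (hξ j)
    have h2 := abs_le.1 (hx j)
    have h3 : cen (N + 1) j = cen (2 * N + 1) j - cen N j := by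
      simp only [cen]; split_ifs <;> ring
    rw [PiLp.sub_apply, h3, abs_le]
    constructor <;> linarith [h1.1, h1.2, h2.1, h2.2]
  set v : ℝ := (2 * δ) ^ d / N with hv
  have hv0 : 0 < v := by positivity
  have hvA : volume A = ENNReal.ofReal v := by rw [hA, volume_rbox _ _ hw, prod_widths]
  have hvS : volume S = ENNReal.ofReal v := by rw [hS, volume_rbox _ _ hw, prod_widths]
  have hvB : volume (-B') = ENNReal.ofReal (2 ^ d * v) := by
    rw [Measure.measure_neg, hB', volume_rbox _ _ fun j => by linarith [hw j],
      Finset.prod_mul_distrib, prod_widths, Finset.prod_const, Finset.card_univ, Fintype.card_fin]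
  have key := H A (-B') (isCompact_rbox _ _).measurableSet (isCompact_rbox _ _).measurableSet.neg
    (isCompact_rbox _ _).isBounded (isCompact_rbox _ _).isBounded.neg
  rw [hvA, hvB, ENNReal.toReal_ofReal hv0.le, ENNReal.toReal_ofReal (by positivity)] at key
  set c : ℝ := K * N ^ (l + 1 - 2 * k) * v * (t / 2) with hc
  have hc0 : 0 < c := by positivity
  -- restriction to `S`, where the function is at least `c` in modulus
  have low : eLpNorm (S.indicator fun _ => c) 2 volume ≤ _ :=
    (eLpNorm_mono fun ξ => ?_).trans key
  · rw [eLpNorm_indicator_const (isCompact_rbox _ _).measurableSet (by norm_num) (by norm_num),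
      hvS, ENNReal.toReal_ofNat, Real.enorm_of_nonneg hc0.le,
      ENNReal.ofReal_rpow_of_pos hv0, ← ENNReal.ofReal_mul hc0.le,
      ENNReal.ofReal_le_ofReal_iff (by positivity),
      Real.mul_rpow (by positivity) hv0.le] at low
    have hvD : v ^ (1 / 2 : ℝ) = D * N ^ (-(1 / 2) : ℝ) := by
      rw [hv, Real.div_rpow (by positivity) hN0.le, Real.rpow_neg hN0.le, div_eq_mul_inv]
    have hvv : v = v ^ (1 / 2 : ℝ) * v ^ (1 / 2 : ℝ) := by
      rw [← Real.rpow_add hv0]; norm_num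
    have hu0 : 0 < v ^ (1 / 2 : ℝ) := by positivity
    have h1 : K * (t / 2) * N ^ (l + 1 - 2 * k) * v ^ (1 / 2 : ℝ) ≤
        C * ((2 : ℝ) ^ d) ^ (1 / 2 : ℝ) := by
      -- divide the estimate by `v = v ^ (1/2) * v ^ (1/2)`
      refine le_of_mul_le_mul_right ?_ (mul_pos hu0 hu0)
      calc _ = c * v ^ (1 / 2 : ℝ) := by rw [hc]; nth_rewrite 4 [hvv]; ring
        _ ≤ _ := low
        _ = _ := by ring
    have h2 : N ^ (l + 1 - 2 * k) * N ^ (-(1 / 2) : ℝ) = N ^ (l + 1 / 2 - 2 * k) := by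
      rw [← Real.rpow_add hN0]; congr 1; ring
    rw [hQ, div_lt_iff₀ (by positivity), ← h2] at hNQ
    rw [hvD] at h1
    linarith
  · by_cases hξ : ξ ∈ S
    swap
    · rw [Set.indicator_of_notMem hξ, norm_zero]; exact norm_nonneg _
    rw [Set.indicator_of_mem hξ, Real.norm_of_nonneg hc0.le]
    obtain ⟨hξi, hξj⟩ := hmem hξ
    obtain ⟨hξ1, hξ2⟩ := abs_le.1 hξi
    obtain ⟨hjξ, hnξ⟩ := size_bounds i hNd (x := ξ) (by linarith) (by linarith)
      fun j hj => (hξj j hj).trans (by linarith)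
    -- for `ξ ∈ S` the indicator of `-B` equals `1` wherever that of `A` does
    have hred : ∀ s : ℝ, (∫ ξ₁,
          ((jb ξ ^ l * ‖ξ‖ / (jb ξ₁ ^ k * jb (ξ - ξ₁) ^ k) : ℝ) : ℂ) *
            (Complex.exp (Complex.I *
                ((t * ‖ξ‖ - s * (‖ξ₁‖ ^ 2 - ‖ξ - ξ₁‖ ^ 2 + ‖ξ‖) : ℝ) : ℂ)) -
              Complex.exp (-Complex.I *
                ((t * ‖ξ‖ + s * (‖ξ₁‖ ^ 2 - ‖ξ - ξ₁‖ ^ 2 - ‖ξ‖) : ℝ) : ℂ))) *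
            ((A.indicator (fun _ => (1 : ℝ)) ξ₁ : ℝ) : ℂ) *
            (((- -B').indicator (fun _ => (1 : ℝ)) (ξ - ξ₁) : ℝ) : ℂ)) = ∫ ξ₁ in A,
          ((jb ξ ^ l * ‖ξ‖ / (jb ξ₁ ^ k * jb (ξ - ξ₁) ^ k) : ℝ) : ℂ) *
            (Complex.exp (Complex.I *
                ((t * ‖ξ‖ - s * (‖ξ₁‖ ^ 2 - ‖ξ - ξ₁‖ ^ 2 + ‖ξ‖) : ℝ) : ℂ)) -
              Complex.exp (-Complex.I *
                ((t * ‖ξ‖ + s * (‖ξ₁‖ ^ 2 - ‖ξ - ξ₁‖ ^ 2 - ‖ξ‖) : ℝ) : ℂ))) := by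
      intro s
      rw [← integral_indicator (isCompact_rbox _ _).measurableSet]
      congr 1
      ext x
      by_cases hx : x ∈ A
      · rw [neg_neg, Set.indicator_of_mem hx, Set.indicator_of_mem hx,
          Set.indicator_of_mem (hSAB ξ hξ x hx), Complex.ofReal_one, mul_one, mul_one]
      · rw [Set.indicator_of_notMem hx, Set.indicator_of_notMem hx, Complex.ofReal_zero,
          mul_zero, zero_mul]
    simp only [hred]
    have hjb : ∀ x : EuclideanSpace ℝ (Fin d), 0 < jb x := fun x =>
      Real.sqrt_pos.2 (by positivity)
    have hW : Continuous fun x => jb ξ ^ l * ‖ξ‖ / (jb x ^ k * jb (ξ - x) ^ k) := by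
      refine continuous_const.div ((continuous_jb_rpow k).mul
        ((continuous_jb_rpow k).comp (by fun_prop))) fun x => ?_
      exact (mul_pos (Real.rpow_pos_of_pos (hjb _) _) (Real.rpow_pos_of_pos (hjb _) _)).ne'
    have main := oscillatory_lower_bound (A := A) (isCompact_rbox _ _) hW
      (q := fun x => ‖x‖ ^ 2 - ‖ξ - x‖ ^ 2) (by fun_prop) (m := K * N ^ (l + 1 - 2 * k))
      (t := t) (R := ‖ξ‖) (by positivity) ht (by linarith) ?_ ?_ ?_
    · rw [hvA, ENNReal.toReal_ofReal hv0.le] at main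
      exact main
    · rw [div_le_iff₀ ht] at hNt
      nlinarith
    · intro x hx
      obtain ⟨hxi, hxj⟩ := hmem hx
      obtain ⟨hx1, hx2⟩ := abs_le.1 hxi
      have hjx := (size_bounds i hNd (x := x) (by linarith) (by linarith)
        fun j hj => (hxj j hj).trans (by linarith)).1
      have hjy := (size_bounds i hNd (x := ξ - x)
        (by rw [PiLp.sub_apply]; linarith) (by rw [PiLp.sub_apply]; linarith)
        fun j hj => by
          rw [PiLp.sub_apply]
          exact (abs_sub _ _).trans (by linarith [hξj j hj, hxj j hj])).1
      exact weight_lower_bound hN0 hjξ.1 hjξ.2 hnξ hjx.1 hjx.2 hjy.1 hjy.2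
    · intro x hx
      obtain ⟨hxi, hxj⟩ := hmem hx
      exact (mul_le_mul_of_nonneg_left
        (resonance_bound i hN4 hδ hδ1 hxi hξi hxj hξj) ht.le).trans hδt
end
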